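/- arXiv:1407.0286 — 9 statements merged into one kernel-verified Lean document; each statement's English description precedes it below -/
import Mathlib

section
/- Let r : ℝ → ℝ be even and increasing on [0,+∞). Define F_r(x,y) = f(x,y) + λ Σ_{i=1}^n r(x_i) for (x,y) ∈ K, and define F̄_r(x,y,z) = f(x,y) + λ Σ_{i=1}^n r(z_i) on Ω₁ = {(x,y,z) ∈ ℝⁿ×ℝᵐ×ℝⁿ : (x,y) ∈ K, |x_i| ≤ z_i for all i = 1,…,n}. Then a point (x*,y*) ∈ K is a global minimizer of F_r on K if and only if (x*,y*,|x*|) is a global minimizer of F̄_r on Ω₁, where |x*| is the componentwise absolute value of x*. Moreover, if (x*,y*,z*) is a global minimizer of F̄_r on Ω₁, then (x*,y*) is a global minimizer of F_r on K. -/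
/-!
The section `p ↦ (p, |x|)` of the projection `((x, y), z) ↦ (x, y)` maps `K` into `Ω₁`, and `F̄_r`
takes the value `F_r p` along it because `r` is even. On `Ω₁` the constraint `|x i| ≤ z i` and
monotonicity of `r` give `F_r ∘ projection ≤ F̄_r`. Hence each map carries points of one problem to
points of the other without increasing the objective, so minimizers correspond.
-/

open Set

theorem isMinOn_of_mapsTo_of_le {α β γ : Type*} [Preorder γ] {F : α → γ} {G : β → γ}
    {s : Set α} {t : Set β} {φ : β → α} {a : α} {b : β} (hmin : IsMinOn F s a)
    (hφ : MapsTo φ t s) (hle : ∀ c ∈ t, F (φ c) ≤ G c) (hba : G b ≤ F a) : IsMinOn G t b :=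
  fun c hc => (hba.trans (hmin (hφ hc))).trans (hle c hc)

section EvenFunction

variable {G β : Type*} [AddGroup G] [LinearOrder G] {r : G → β}

theorem even_apply_abs (hr : Function.Even r) (t : G) : r |t| = r t := by
  rcases abs_choice t with habs | habs
  · rw [habs]
  · rw [habs, hr]

theorem even_apply_le_of_abs_le [AddLeftMono G] [AddRightMono G] [Preorder β]
    (hr : Function.Even r) (hmono : MonotoneOn r (Ici 0)) {s t : G} (hst : |s| ≤ t) :
    r s ≤ r t := by
  rw [← even_apply_abs hr s]
  exact hmono (abs_nonneg s) ((abs_nonneg s).trans hst) hst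

end EvenFunction

section Lift

variable {ι Y : Type*}

/-- The set `Ω₁` of points `((x, y), z)` with `(x, y) ∈ K` and `|x i| ≤ z i` for all `i`, on which
the lifted problem is posed. -/
def absLiftSet (K : Set ((ι → ℝ) × Y)) : Set (((ι → ℝ) × Y) × (ι → ℝ)) :=
  {w | w.1 ∈ K ∧ ∀ i, |w.1.1 i| ≤ w.2 i}

/-- The lift `(x, y) ↦ ((x, y), |x|)` of the original problem's points to those of the lifted
problem, with `|x|` the componentwise absolute value. -/
def absLift (p : (ι → ℝ) × Y) : ((ι → ℝ) × Y) × (ι → ℝ) :=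
  (p, fun i => |p.1 i|)

/-- The objective `F_r (x, y) = f (x, y) + lam * ∑ i, r (x i)` of the original problem. -/
def penalizedObjective [Fintype ι] (f : (ι → ℝ) × Y → ℝ) (lam : ℝ) (r : ℝ → ℝ) (p : (ι → ℝ) × Y) :
    ℝ :=
  f p + lam * ∑ i, r (p.1 i)

/-- The objective `F̄_r (x, y, z) = f (x, y) + lam * ∑ i, r (z i)` of the lifted problem. -/
def liftedObjective [Fintype ι] (f : (ι → ℝ) × Y → ℝ) (lam : ℝ) (r : ℝ → ℝ)
    (w : ((ι → ℝ) × Y) × (ι → ℝ)) : ℝ :=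
  f w.1 + lam * ∑ i, r (w.2 i)

variable {K : Set ((ι → ℝ) × Y)}

theorem mapsTo_absLift : MapsTo absLift K (absLiftSet K) :=
  fun _ hp => ⟨hp, fun _ => le_rfl⟩

theorem mapsTo_fst_absLiftSet : MapsTo Prod.fst (absLiftSet K) K :=
  fun _ hw => hw.1

variable [Fintype ι] {f : (ι → ℝ) × Y → ℝ} {lam : ℝ} {r : ℝ → ℝ}

theorem liftedObjective_absLift (hr : Function.Even r) (p : (ι → ℝ) × Y) :
    liftedObjective f lam r (absLift p) = penalizedObjective f lam r p := by
  simp only [liftedObjective, absLift, penalizedObjective, even_apply_abs hr]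

theorem penalizedObjective_fst_le_liftedObjective (hlam : 0 ≤ lam) (hr : Function.Even r)
    (hmono : MonotoneOn r (Ici 0)) {w : ((ι → ℝ) × Y) × (ι → ℝ)} (hw : ∀ i, |w.1.1 i| ≤ w.2 i) :
    penalizedObjective f lam r w.1 ≤ liftedObjective f lam r w := by
  unfold penalizedObjective liftedObjective
  gcongr with i
  exact even_apply_le_of_abs_le hr hmono (hw i)

theorem isMinOn_liftedObjective_absLift (hlam : 0 ≤ lam) (hr : Function.Even r)
    (hmono : MonotoneOn r (Ici 0)) {p : (ι → ℝ) × Y}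
    (hmin : IsMinOn (penalizedObjective f lam r) K p) :
    IsMinOn (liftedObjective f lam r) (absLiftSet K) (absLift p) :=
  isMinOn_of_mapsTo_of_le hmin mapsTo_fst_absLiftSet
    (fun _ hw => penalizedObjective_fst_le_liftedObjective hlam hr hmono hw.2)
    (liftedObjective_absLift hr p).le

theorem isMinOn_penalizedObjective_fst (hlam : 0 ≤ lam) (hr : Function.Even r)
    (hmono : MonotoneOn r (Ici 0)) {w : ((ι → ℝ) × Y) × (ι → ℝ)} (hw : w ∈ absLiftSet K)
    (hmin : IsMinOn (liftedObjective f lam r) (absLiftSet K) w) :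
    IsMinOn (penalizedObjective f lam r) K w.1 :=
  isMinOn_of_mapsTo_of_le hmin mapsTo_absLift
    (fun q _ => (liftedObjective_absLift hr q).le)
    (penalizedObjective_fst_le_liftedObjective hlam hr hmono hw.2)

theorem stmt_0_general (hlam : 0 ≤ lam) (hr : Function.Even r) (hmono : MonotoneOn r (Ici 0)) :
    (∀ p ∈ K, IsMinOn (penalizedObjective f lam r) K p ↔
      absLift p ∈ absLiftSet K ∧
        IsMinOn (liftedObjective f lam r) (absLiftSet K) (absLift p)) ∧
    (∀ w ∈ absLiftSet K, IsMinOn (liftedObjective f lam r) (absLiftSet K) w →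
      w.1 ∈ K ∧ IsMinOn (penalizedObjective f lam r) K w.1) := by
  refine ⟨fun p hp => ⟨fun hmin => ?_, fun ⟨hmem, hmin⟩ => ?_⟩, fun w hw hmin => ?_⟩
  · exact ⟨mapsTo_absLift hp, isMinOn_liftedObjective_absLift hlam hr hmono hmin⟩
  · exact isMinOn_penalizedObjective_fst hlam hr hmono hmem hmin
  · exact ⟨mapsTo_fst_absLiftSet hw, isMinOn_penalizedObjective_fst hlam hr hmono hw hmin⟩

end Lift

/-- equivalence between global minimizers of the approximate problem
`min F_r` over `K` and of `min F̄_r` over `Ω₁`. -/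
theorem stmt_0 {n m : ℕ}
    (K : Set ((Fin n → ℝ) × (Fin m → ℝ))) (hK : Convex ℝ K)
    (g h : (Fin n → ℝ) × (Fin m → ℝ) → ℝ)
    (hg : ConvexOn ℝ Set.univ g) (hh : ConvexOn ℝ Set.univ h)
    (f : (Fin n → ℝ) × (Fin m → ℝ) → ℝ) (hf : ∀ p, f p = g p - h p)
    (lam : ℝ) (hlam : 0 < lam)
    (r : ℝ → ℝ) (hrEven : ∀ t, r (-t) = r t)
    (hrMono : MonotoneOn r (Set.Ici 0))
    (Fr : (Fin n → ℝ) × (Fin m → ℝ) → ℝ)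
    (hFr : ∀ p, Fr p = f p + lam * ∑ i, r (p.1 i))
    (Fbar : ((Fin n → ℝ) × (Fin m → ℝ)) × (Fin n → ℝ) → ℝ)
    (hFbar : ∀ pz, Fbar pz = f pz.1 + lam * ∑ i, r (pz.2 i))
    (Ω₁ : Set (((Fin n → ℝ) × (Fin m → ℝ)) × (Fin n → ℝ)))
    (hΩ : Ω₁ = {pz | pz.1 ∈ K ∧ ∀ i, |pz.1.1 i| ≤ pz.2 i}) :
    (∀ p ∈ K,
      ((∀ q ∈ K, Fr p ≤ Fr q) ↔
        ((p, fun i => |p.1 i|) ∈ Ω₁ ∧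
          ∀ qz ∈ Ω₁, Fbar (p, fun i => |p.1 i|) ≤ Fbar qz)))
    ∧ (∀ pz ∈ Ω₁, (∀ qz ∈ Ω₁, Fbar pz ≤ Fbar qz) →
        pz.1 ∈ K ∧ ∀ q ∈ K, Fr pz.1 ≤ Fr q) := by
  obtain ⟨rfl, rfl⟩ : Fr = penalizedObjective f lam r ∧ Fbar = liftedObjective f lam r :=
    ⟨funext hFr, funext hFbar⟩
  subst hΩ
  exact stmt_0_general hlam.le hrEven hrMono
end

section
/- Let r : ℝ → ℝ be even and increasing on [0,+∞). Define F_r(x,y) = f(x,y) + λ Σ_{i=1}^n r(x_i) for (x,y) ∈ K, and define F̄_r(x,y,z) = f(x,y) + λ Σ_{i=1}^n r(z_i) on Ω₁ = {(x,y,z) ∈ ℝⁿ×ℝᵐ×ℝⁿ : (x,y) ∈ K, |x_i| ≤ z_i for all i = 1,…,n}. Then a point (x*,y*) ∈ K is a local minimizer of F_r on K if and only if (x*,y*,|x*|) is a local minimizer of F̄_r on Ω₁, where |x*| is the componentwise absolute value of x*. -/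
/-!
Since `r` is even and increasing on `[0, ∞)`, among the feasible `z` above a fixed `(x, y)` the
choice `z = |x|` minimizes the lifted objective and there it equals the original one. The maps
`(x, y, z) ↦ (x, y)` and `(x, y) ↦ (x, y, |x|)` are continuous and exchange the base points, so each
carries local minimality across.
-/

open Set Topology

theorem isLocalMinOn_iff_exists_norm_sub_lt {E β : Type*} [SeminormedAddCommGroup E] [Preorder β]
    {φ : E → β} {S : Set E} {a : E} :
    IsLocalMinOn φ S a ↔ ∃ δ > 0, ∀ q ∈ S, ‖q - a‖ < δ → φ a ≤ φ q := by
  simp only [IsLocalMinOn, IsMinFilter, Metric.nhdsWithin_basis_ball.eventually_iff, mem_inter_iff,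
    mem_ball_iff_norm, and_imp, gt_iff_lt]
  exact exists_congr fun _ => and_congr_right' (forall_congr' fun _ => forall_comm)

theorem isLocalMinOn_iff_of_section {X Y β : Type*} [TopologicalSpace X] [TopologicalSpace Y]
    [Preorder β] {φ : X → β} {ψ : Y → β} {S : Set X} {T : Set Y} {π : Y → X} {σ : X → Y} {a : X}
    (ha : a ∈ S) (hπσ : π (σ a) = a)
    (hπ : ContinuousWithinAt π T (σ a)) (hσ : ContinuousWithinAt σ S a)
    (hπ_maps : MapsTo π T S) (hσ_maps : MapsTo σ S T)
    (hφψ : ∀ y ∈ T, φ (π y) ≤ ψ y) (hψφ : ∀ x ∈ S, ψ (σ x) = φ x) :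
    IsLocalMinOn φ S a ↔ IsLocalMinOn ψ T (σ a) := by
  constructor <;> intro hmin
  · have hmin_comp : IsLocalMinOn (φ ∘ π) T (σ a) :=
      IsMinFilter.comp_tendsto (by rwa [hπσ]) (hπ.tendsto_nhdsWithin hπ_maps)
    have hle : φ ∘ π ≤ᶠ[𝓝[T] σ a] ψ := eventually_nhdsWithin_of_forall hφψ
    exact hle.isMinFilter (by rw [Function.comp_apply, hπσ, hψφ a ha]) hmin_comp
  · have hmin_comp : IsLocalMinOn (ψ ∘ σ) S a :=
      hmin.comp_tendsto (hσ.tendsto_nhdsWithin hσ_maps)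
    exact hmin_comp.congr (eventually_nhdsWithin_of_forall hψφ) ha

/-- The feasible set `Ω₁` of the lifted problem: pairs `(q, z)` with `q ∈ K` and `z` above the
absolute value of the component `x q` of `q`. -/
def absEpigraph {E V : Type*} [Lattice V] [AddGroup V] (x : E → V) (K : Set E) : Set (E × V) :=
  {qz | qz.1 ∈ K ∧ |x qz.1| ≤ qz.2}

theorem isLocalMinOn_add_comp_iff_absEpigraph {E V β : Type*} [TopologicalSpace E]
    [TopologicalSpace V] [Lattice V] [AddCommGroup V] [IsOrderedAddMonoid V]
    [Preorder β] [Add β] [AddLeftMono β]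
    {x : E → V} {K : Set E} {p : E} (hp : p ∈ K) (hx : ContinuousWithinAt (fun q => |x q|) K p)
    (f : E → β) {R : V → β} (hR_abs : ∀ u, R |u| = R u) (hR_mono : MonotoneOn R (Ici 0)) :
    IsLocalMinOn (fun q => f q + R (x q)) K p ↔
      IsLocalMinOn (fun qz => f qz.1 + R qz.2) (absEpigraph x K) (p, |x p|) := by
  have hR_le : ∀ u z, |u| ≤ z → R u ≤ R z := fun u z huz =>
    hR_abs u ▸ hR_mono (abs_nonneg u) ((abs_nonneg u).trans huz) huz
  exact isLocalMinOn_iff_of_section (π := Prod.fst) (σ := fun q => (q, |x q|)) hp rfl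
    continuousWithinAt_fst (continuousWithinAt_id.prodMk hx)
    (fun _ hqz => hqz.1) (fun _ hq => ⟨hq, le_rfl⟩)
    (fun _ hqz => add_le_add_right (hR_le _ _ hqz.2) _) (fun _ _ => by rw [hR_abs])

theorem apply_abs_of_even {G β : Type*} [AddGroup G] [LinearOrder G] {r : G → β}
    (hr : r.Even) (t : G) : r |t| = r t := by
  rcases abs_choice t with h | h <;> rw [h]
  exact hr t

theorem monotoneOn_sum_apply {ι α β : Type*} [Fintype ι] [Preorder α] [Preorder β]
    [AddCommMonoid β] [AddLeftMono β] {r : ι → α → β} {a : ι → α}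
    (hr : ∀ i, MonotoneOn (r i) (Ici (a i))) :
    MonotoneOn (fun z : ι → α => ∑ i, r i (z i)) (Ici a) := fun _ hu _ hz huz =>
  Finset.sum_le_sum fun i _ => hr i (hu i) (hz i) (huz i)

theorem stmt_1_general {E ι : Type*} [TopologicalSpace E] [Fintype ι] {K : Set E} {x : E → ι → ℝ}
    {p : E} (hp : p ∈ K) (hx : ContinuousWithinAt x K p) (f : E → ℝ) {lam : ℝ} (hlam : 0 ≤ lam)
    {r : ℝ → ℝ} (hr_even : r.Even) (hr_mono : MonotoneOn r (Ici 0)) :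
    IsLocalMinOn (fun q => f q + lam * ∑ i, r (x q i)) K p ↔
      (p, |x p|) ∈ absEpigraph x K ∧
        IsLocalMinOn (fun qz => f qz.1 + lam * ∑ i, r (qz.2 i)) (absEpigraph x K) (p, |x p|) := by
  have hmem : (p, |x p|) ∈ absEpigraph x K := ⟨hp, le_rfl⟩
  have hx_abs : ContinuousWithinAt (fun q => |x q|) K p :=
    continuousWithinAt_pi.2 fun i => (continuousWithinAt_pi.1 hx i).abs
  have hsum : MonotoneOn (fun z : ι → ℝ => ∑ i, r (z i)) (Ici 0) :=
    monotoneOn_sum_apply fun _ => hr_mono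
  rw [and_iff_right hmem]
  exact isLocalMinOn_add_comp_iff_absEpigraph (R := fun z : ι → ℝ => lam * ∑ i, r (z i)) hp hx_abs f
    (fun u => by simp only [Pi.abs_apply, apply_abs_of_even hr_even])
    ((monotone_mul_left_of_nonneg hlam).comp_monotoneOn hsum)

/-- equivalence between local minimizers of the approximate problem
`min F_r` over `K` and of `min F̄_r` over `Ω₁` (at the point `(x*, y*, |x*|)`). -/
theorem stmt_1 {n m : ℕ}
    (K : Set ((Fin n → ℝ) × (Fin m → ℝ))) (hK : Convex ℝ K)
    (g h : (Fin n → ℝ) × (Fin m → ℝ) → ℝ)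
    (hg : ConvexOn ℝ Set.univ g) (hh : ConvexOn ℝ Set.univ h)
    (f : (Fin n → ℝ) × (Fin m → ℝ) → ℝ) (hf : ∀ p, f p = g p - h p)
    (lam : ℝ) (hlam : 0 < lam)
    (r : ℝ → ℝ) (hrEven : ∀ t, r (-t) = r t)
    (hrMono : MonotoneOn r (Set.Ici 0))
    (Fr : (Fin n → ℝ) × (Fin m → ℝ) → ℝ)
    (hFr : ∀ p, Fr p = f p + lam * ∑ i, r (p.1 i))
    (Fbar : ((Fin n → ℝ) × (Fin m → ℝ)) × (Fin n → ℝ) → ℝ)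
    (hFbar : ∀ pz, Fbar pz = f pz.1 + lam * ∑ i, r (pz.2 i))
    (Ω₁ : Set (((Fin n → ℝ) × (Fin m → ℝ)) × (Fin n → ℝ)))
    (hΩ : Ω₁ = {pz | pz.1 ∈ K ∧ ∀ i, |pz.1.1 i| ≤ pz.2 i}) :
    ∀ p ∈ K,
      ((∃ δ > 0, ∀ q ∈ K, ‖q - p‖ < δ → Fr p ≤ Fr q) ↔
        ((p, fun i => |p.1 i|) ∈ Ω₁ ∧
          ∃ δ > 0, ∀ qz ∈ Ω₁, ‖qz - (p, fun i => |p.1 i|)‖ < δ →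
            Fbar (p, fun i => |p.1 i|) ≤ Fbar qz)) := by
  obtain rfl := funext hFr
  obtain rfl := funext hFbar
  subst hΩ
  intro p hp
  have general := stmt_1_general hp continuousWithinAt_fst f hlam.le hrEven hrMono
  rwa [isLocalMinOn_iff_exists_norm_sub_lt, isLocalMinOn_iff_exists_norm_sub_lt] at general
end

section
/- Suppose the family {r_θ}_{θ>0} satisfies Assumption 1 and in addition K is compact. Then for every ε > 0 there exists θ(ε) > 0 such that P_θ ⊆ P + B(0,ε) for all θ ≥ θ(ε), where B(0,ε) denotes the open ball of radius ε centered at the origin of ℝⁿ × ℝᵐ. -/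
open Filter Topology

/-- The number of nonzero components of `x`, as a real number. -/
noncomputable def zeroNorm {n : ℕ} (x : Fin n → ℝ) : ℝ :=
  ((Finset.univ.filter fun i => x i ≠ 0).card : ℝ)

/-- The step function: `s(t) = 1` for `t ≠ 0`, `s(0) = 0`. -/
noncomputable def stepFn (t : ℝ) : ℝ := if t = 0 then 0 else 1

/-- Convex subdifferential of a finite function `φ : ℝ → ℝ` at `t₀`. -/
def subdiffR (φ : ℝ → ℝ) (t₀ : ℝ) : Set ℝ :=
  {v | ∀ t, φ t ≥ φ t₀ + (t - t₀) * v}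

/-- The "DC subdifferential" `∂r(t) = {u - v : u ∈ ∂φ(t), v ∈ ∂ψ(t)}`. -/
def rSubdiff (φ ψ : ℝ → ℝ) (t : ℝ) : Set ℝ :=
  {μ | ∃ u ∈ subdiffR φ t, ∃ v ∈ subdiffR ψ t, μ = u - v}

/-- Assumption 1 on the family of approximations `r θ`, with DC decomposition
`r θ = φ θ - ψ θ`. -/
def Assumption1 (r φ ψ : ℝ → ℝ → ℝ) : Prop :=
  (∀ t, Tendsto (fun θ => r θ t) atTop (nhds (stepFn t))) ∧
  (∀ θ > (0 : ℝ), ∀ t, r θ (-t) = r θ t) ∧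
  (∀ θ > (0 : ℝ), MonotoneOn (r θ) (Set.Ici 0)) ∧
  (∀ θ > (0 : ℝ), ConvexOn ℝ Set.univ (φ θ) ∧ ConvexOn ℝ Set.univ (ψ θ) ∧
    ∀ t, r θ t = φ θ t - ψ θ t) ∧
  (∀ θ > (0 : ℝ), ∀ t : ℝ, ∀ μ ∈ rSubdiff (φ θ) (ψ θ) t, 0 ≤ t * μ) ∧
  (∀ a b : ℝ, a ≤ b → (0 : ℝ) ∉ Set.Icc a b → ∀ ε > (0 : ℝ), ∃ Θ : ℝ, ∀ θ ≥ Θ,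
    ∀ t ∈ Set.Icc a b, ∀ z ∈ rSubdiff (φ θ) (ψ θ) t, |z| ≤ ε)

/-!
Pointwise convergence `r θ → stepFn` is not uniform near the jump at `0`, so it does not by itself
control `r θ` at points that move with `θ`. What saves the argument is a one-sided bound: if `t` is
near `a` then `|a / 2| ≤ |t|`, so evenness and monotonicity give `r θ (a / 2) ≤ r θ t`, and
`r θ (a / 2)` tends to `stepFn (a / 2) = stepFn a`. Together with pointwise convergence this is
Γ-convergence of the objectives, and on a compact set Γ-convergence pushes the minimizers into any
neighbourhood of the minimizers of the limit.
-/

section ArgminSet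

variable {ι X β : Type*}

/-- The set of global minimizers of `F` on `K`. -/
def argminSet [Preorder β] (F : X → β) (K : Set X) : Set X :=
  {x | x ∈ K ∧ IsMinOn F K x}

theorem notMem_argminSet_iff [LinearOrder β] {F : X → β} {K : Set X} {x : X} (hx : x ∈ K) :
    x ∉ argminSet F K ↔ ∃ y ∈ K, F y < F x := by
  simp [argminSet, isMinOn_iff, hx]

variable [TopologicalSpace X] [LinearOrder β] [DenselyOrdered β]
  {l : Filter ι} {F : ι → X → β} {F₀ : X → β} {K : Set X}

theorem eventually_notMem_argminSet {x : X}
    (hlimsup : ∀ y ∈ K, ∀ c > F₀ y, ∀ᶠ θ in l, F θ y < c)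
    (hliminf : ∀ c < F₀ x, ∀ᶠ z in l ×ˢ 𝓝 x, z.2 ∈ K → c < F z.1 z.2)
    (hx : x ∈ K) (hmin : x ∉ argminSet F₀ K) :
    ∀ᶠ z in l ×ˢ 𝓝 x, z.2 ∉ argminSet (F z.1) K := by
  obtain ⟨y, hy, hyx⟩ := (notMem_argminSet_iff hx).1 hmin
  obtain ⟨c, hyc, hcx⟩ := exists_between hyx
  filter_upwards [(hlimsup y hy c hyc).prod_inl (𝓝 x), hliminf c hcx] with z hzy hcz hz
  exact (notMem_argminSet_iff hz.1).2 ⟨y, hy, hzy.trans (hcz hz.1)⟩ hz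

theorem eventually_argminSet_subset_of_isOpen {U : Set X} (hU : IsOpen U) (hK : IsCompact K)
    (hlimsup : ∀ y ∈ K, ∀ c > F₀ y, ∀ᶠ θ in l, F θ y < c)
    (hliminf : ∀ x ∈ K, ∀ c < F₀ x, ∀ᶠ z in l ×ˢ 𝓝 x, z.2 ∈ K → c < F z.1 z.2)
    (hF₀U : argminSet F₀ K ⊆ U) : ∀ᶠ θ in l, argminSet (F θ) K ⊆ U := by
  have near_diff : ∀ᶠ z in l ×ˢ 𝓝ˢ (K \ U), z.2 ∉ argminSet (F z.1) K :=
    (hK.diff hU).mem_prod_nhdsSet_of_forall fun x hx =>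
      eventually_notMem_argminSet hlimsup (hliminf x hx.1) hx.1 fun hmin => hx.2 (hF₀U hmin)
  have on_diff : ∀ᶠ θ in l, ∀ x ∈ K \ U, x ∉ argminSet (F θ) K :=
    eventually_prod_principal_iff.1
      (near_diff.filter_mono (prod_mono le_rfl principal_le_nhdsSet))
  filter_upwards [on_diff] with θ hθ x hx
  by_contra hxU
  exact hθ x ⟨hx.1, hxU⟩ hx

end ArgminSet

theorem stepFn_half (t : ℝ) : stepFn (t / 2) = stepFn t := by
  simp [stepFn]

theorem zeroNorm_eq_sum_stepFn {n : ℕ} (x : Fin n → ℝ) : zeroNorm x = ∑ i, stepFn (x i) := by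
  simp [zeroNorm, stepFn, Finset.sum_ite]

theorem apply_le_apply_of_abs_le_abs {α β : Type*} [AddCommGroup α] [LinearOrder α]
    [IsOrderedAddMonoid α] [Preorder β] {ρ : α → β} (heven : ρ.Even)
    (hmono : MonotoneOn ρ (Set.Ici 0)) {s t : α} (hst : |s| ≤ |t|) : ρ s ≤ ρ t := by
  have apply_abs (u : α) : ρ |u| = ρ u := by
    rcases abs_choice u with hu | hu <;> simp only [hu, heven.eq]
  simpa only [apply_abs] using hmono (abs_nonneg s) (abs_nonneg t) hst

theorem eventually_abs_half_le_abs (a : ℝ) : ∀ᶠ t in 𝓝 a, |a / 2| ≤ |t| := by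
  rcases eq_or_ne a 0 with rfl | ha
  · simp
  · have half_lt : |a / 2| < |a| := by
      rw [abs_div, abs_two]
      exact half_lt_self (abs_pos.2 ha)
    exact (continuous_abs.continuousAt.eventually_const_lt half_lt).mono fun _ => le_of_lt

section SparsityPenalty

variable {ι : Type*} {l : Filter ι} {r : ι → ℝ → ℝ} {n : ℕ}

theorem tendsto_sum_zeroNorm (hr : ∀ t, Tendsto (r · t) l (𝓝 (stepFn t))) (x : Fin n → ℝ) :
    Tendsto (fun θ => ∑ i, r θ (x i)) l (𝓝 (zeroNorm x)) := by
  rw [zeroNorm_eq_sum_stepFn]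
  exact tendsto_finsetSum _ fun i _ => hr (x i)

theorem tendsto_sum_half_zeroNorm (hr : ∀ t, Tendsto (r · t) l (𝓝 (stepFn t))) (x : Fin n → ℝ) :
    Tendsto (fun θ => ∑ i, r θ (x i / 2)) l (𝓝 (zeroNorm x)) := by
  simpa only [zeroNorm_eq_sum_stepFn, stepFn_half] using tendsto_sum_zeroNorm hr fun i => x i / 2

theorem eventually_sum_half_le_sum {κ : Type*} [Fintype κ] (heven : ∀ᶠ θ in l, (r θ).Even)
    (hmono : ∀ᶠ θ in l, MonotoneOn (r θ) (Set.Ici 0)) (x : κ → ℝ) :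
    ∀ᶠ z in l ×ˢ 𝓝 x, ∑ i, r z.1 (x i / 2) ≤ ∑ i, r z.1 (z.2 i) := by
  have half_le : ∀ᶠ y in 𝓝 x, ∀ i, |x i / 2| ≤ |y i| :=
    eventually_all.2 fun i => (continuous_apply i).continuousAt.eventually
      (eventually_abs_half_le_abs (x i))
  filter_upwards [(heven.and hmono).prod_mk half_le] with z ⟨⟨hz_even, hz_mono⟩, hz⟩
  exact Finset.sum_le_sum fun i _ => apply_le_apply_of_abs_le_abs hz_even hz_mono (hz i)

variable {Y : Type*} [TopologicalSpace Y] {K : Set ((Fin n → ℝ) × Y)} {f : (Fin n → ℝ) × Y → ℝ}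
  {lam : ℝ}

theorem eventually_lt_penalized (hlam : 0 ≤ lam)
    (hr : ∀ t, Tendsto (r · t) l (𝓝 (stepFn t))) (heven : ∀ᶠ θ in l, (r θ).Even)
    (hmono : ∀ᶠ θ in l, MonotoneOn (r θ) (Set.Ici 0)) {p : (Fin n → ℝ) × Y}
    (hf : LowerSemicontinuousWithinAt f K p) {c : ℝ} (hc : c < f p + lam * zeroNorm p.1) :
    ∀ᶠ z in l ×ˢ 𝓝 p, z.2 ∈ K → c < f z.2 + lam * ∑ i, r z.1 (z.2.1 i) := by
  obtain ⟨b, hcb, hbf⟩ := exists_between (sub_lt_iff_lt_add.2 hc)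
  have lt_f : ∀ᶠ q in 𝓝 p, q ∈ K → b < f q := eventually_nhdsWithin_iff.1 (hf b hbf)
  have lt_half : ∀ᶠ θ in l, c - b < lam * ∑ i, r θ (p.1 i / 2) :=
    ((tendsto_sum_half_zeroNorm hr p.1).const_mul lam).eventually_const_lt (sub_lt_comm.1 hcb)
  have half_le : ∀ᶠ z in l ×ˢ 𝓝 p, ∑ i, r z.1 (p.1 i / 2) ≤ ∑ i, r z.1 (z.2.1 i) :=
    (tendsto_id.prodMap continuous_fst.continuousAt).eventually
      (eventually_sum_half_le_sum heven hmono p.1)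
  filter_upwards [lt_half.prod_mk lt_f, half_le] with z ⟨hz_half, hz_f⟩ hz_le hzK
  linarith [hz_f hzK, mul_le_mul_of_nonneg_left hz_le hlam]

theorem eventually_argminSet_penalized_subset_of_isOpen
    {U : Set ((Fin n → ℝ) × Y)} (hU : IsOpen U)
    (hK : IsCompact K) (hf : LowerSemicontinuousOn f K) (hlam : 0 ≤ lam)
    (hr : ∀ t, Tendsto (r · t) l (𝓝 (stepFn t))) (heven : ∀ᶠ θ in l, (r θ).Even)
    (hmono : ∀ᶠ θ in l, MonotoneOn (r θ) (Set.Ici 0))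
    (hPU : argminSet (fun p => f p + lam * zeroNorm p.1) K ⊆ U) :
    ∀ᶠ θ in l, argminSet (fun p => f p + lam * ∑ i, r θ (p.1 i)) K ⊆ U :=
  eventually_argminSet_subset_of_isOpen hU hK
    (fun q _ _ hc =>
      (((tendsto_sum_zeroNorm hr q.1).const_mul lam).const_add (f q)).eventually_lt_const hc)
    (fun p hp _ hc => eventually_lt_penalized hlam hr heven hmono (hf p hp) hc)
    hPU

end SparsityPenalty

open Pointwise in
theorem stmt_3_general {n : ℕ} {Y : Type*} [SeminormedAddCommGroup Y]
    {K : Set ((Fin n → ℝ) × Y)} (hK : IsCompact K)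
    {f : (Fin n → ℝ) × Y → ℝ} (hf : LowerSemicontinuousOn f K) {lam : ℝ} (hlam : 0 ≤ lam)
    {r : ℝ → ℝ → ℝ} (hr : ∀ t, Tendsto (r · t) atTop (𝓝 (stepFn t)))
    (heven : ∀ θ > 0, (r θ).Even) (hmono : ∀ θ > 0, MonotoneOn (r θ) (Set.Ici 0)) :
    ∀ ε > (0 : ℝ), ∃ Θ > (0 : ℝ), ∀ θ ≥ Θ,
      argminSet (fun p => f p + lam * ∑ i, r θ (p.1 i)) K ⊆
        argminSet (fun p => f p + lam * zeroNorm p.1) K + Metric.ball 0 ε := by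
  intro ε hε
  have subset_thickening := eventually_argminSet_penalized_subset_of_isOpen
    Metric.isOpen_thickening hK hf hlam hr ((eventually_gt_atTop 0).mono heven)
    ((eventually_gt_atTop 0).mono hmono) (Metric.self_subset_thickening hε _)
  obtain ⟨Θ, hΘ_one, hΘ⟩ := (atTop_basis' 1).eventually_iff.1 subset_thickening
  exact ⟨Θ, one_pos.trans_le hΘ_one, fun θ hθ => by simpa only [add_ball_zero] using hΘ hθ⟩

open Pointwise in
/-- if `K` is compact, global minimizers of the approximate problem
eventually lie in an `ε`-neighbourhood of the solution set of the ℓ0-problem. -/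
theorem stmt_3 {n m : ℕ}
    (K : Set ((Fin n → ℝ) × (Fin m → ℝ))) (hK : Convex ℝ K) (hKc : IsCompact K)
    (g h : (Fin n → ℝ) × (Fin m → ℝ) → ℝ)
    (hg : ConvexOn ℝ Set.univ g) (hh : ConvexOn ℝ Set.univ h)
    (f : (Fin n → ℝ) × (Fin m → ℝ) → ℝ) (hf : ∀ p, f p = g p - h p)
    (lam : ℝ) (hlam : 0 < lam)
    (r φ ψ : ℝ → ℝ → ℝ) (hA : Assumption1 r φ ψ)
    (P : Set ((Fin n → ℝ) × (Fin m → ℝ)))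
    (hP : P = {p | p ∈ K ∧ ∀ q ∈ K,
      f p + lam * zeroNorm p.1 ≤ f q + lam * zeroNorm q.1})
    (Pθ : ℝ → Set ((Fin n → ℝ) × (Fin m → ℝ)))
    (hPθ : ∀ θ, Pθ θ = {p | p ∈ K ∧ ∀ q ∈ K,
      f p + lam * ∑ i, r θ (p.1 i) ≤ f q + lam * ∑ i, r θ (q.1 i)}) :
    ∀ ε > (0 : ℝ), ∃ Θ > (0 : ℝ), ∀ θ ≥ Θ, Pθ θ ⊆ P + Metric.ball 0 ε := by
  subst hP
  obtain rfl : f = fun p => g p - h p := funext hf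
  have hf_cont : Continuous fun p => g p - h p :=
    hg.locallyLipschitz.continuous.sub hh.locallyLipschitz.continuous
  simp only [hPθ]
  exact stmt_3_general hKc (hf_cont.lowerSemicontinuous.lowerSemicontinuousOn K) hlam.le
    hA.1 hA.2.1 hA.2.2.1
end

section
/- Suppose the family {r_θ}_{θ>0} satisfies Assumption 1 and K is compact. Then for every ε > 0 there exists θ(ε) > 0 such that L_θ ⊆ L + B(0,ε) for all θ ≥ θ(ε), where B(0,ε) denotes the open ball of radius ε centered at the origin of ℝⁿ × ℝᵐ. -/
open Filter Topology

/-- Canonical inner product on `ℝⁿ × ℝᵐ`. -/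
def dotE {n m : ℕ} (u v : (Fin n → ℝ) × (Fin m → ℝ)) : ℝ :=
  (∑ i, u.1 i * v.1 i) + (∑ j, u.2 j * v.2 j)

/-- Convex subdifferential of a finite function on `ℝⁿ × ℝᵐ`. -/
def subdiffE {n m : ℕ} (φ : (Fin n → ℝ) × (Fin m → ℝ) → ℝ)
    (p : (Fin n → ℝ) × (Fin m → ℝ)) : Set ((Fin n → ℝ) × (Fin m → ℝ)) :=
  {v | ∀ q, φ q ≥ φ p + dotE (q - p) v}

/-!
Argue along an ultrafilter finer than `atTop`. If the inclusion failed frequently, compactness of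
the graph of `∂f` over `K` would make penalised stationary points `p_θ ∉ L + B(0, ε)`, together with
their elements of `∂f`, converge to some point of that graph over `p ∈ K`. Test the variational
inequality at `p_θ` with a point `q ∈ K(p)`. The penalty terms with `p_i ≠ 0` vanish in the limit by
(v), and those with `p_i = 0` equal `-z_i (p_θ)_i`, which is nonpositive by (iv). Hence `p ∈ L`,
which is absurd because `p_θ` is eventually within `ε` of `p`.
-/

section Ultrafilter

variable {α X Y : Type*} [TopologicalSpace X]

theorem eventually_subset_of_forall_ultrafilter_tendsto {l : Filter α} {S : α → Set X} {V : Set X}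
    (hV : IsOpen V)
    (hS : ∀ (U : Ultrafilter α) (p : α → X), ↑U ≤ l → (∀ᶠ a in (U : Filter α), p a ∈ S a) →
      ∃ x ∈ V, Tendsto p U (𝓝 x)) :
    ∀ᶠ a in l, S a ⊆ V := by
  by_contra hcon
  have : (l ⊓ 𝓟 {a | ¬ S a ⊆ V}).NeBot := frequently_iff_neBot.1 (not_eventually.1 hcon)
  let U := Ultrafilter.of (l ⊓ 𝓟 {a | ¬ S a ⊆ V})
  have hU : ↑U ≤ l ⊓ 𝓟 {a | ¬ S a ⊆ V} := Ultrafilter.of_le _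
  have escape : ∀ᶠ a in (U : Filter α), ∃ x, x ∈ S a ∧ x ∉ V :=
    (tendsto_principal.1 (hU.trans inf_le_right)).mono fun _ ha => Set.not_subset.1 ha
  obtain ⟨p, hp⟩ := escape.choice
  obtain ⟨x, hxV, hx⟩ := hS U p (hU.trans inf_le_left) (hp.mono fun _ h => h.1)
  obtain ⟨a, haV, ha⟩ := ((hx.eventually (hV.mem_nhds hxV)).and hp).exists
  exact ha.2 haV

/-- The graph of the set-valued map `D` over `K`. Its compactness expresses at once that `K` is
compact (where `D` has nonempty values) and that `D` is bounded and closed over `K`. -/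
def graphOver (K : Set X) (D : X → Set Y) : Set (X × Y) :=
  {x | x.1 ∈ K ∧ x.2 ∈ D x.1}

open scoped Pointwise in
theorem isCompact_graphOver_sub [T2Space X] [TopologicalSpace Y] [Sub Y] [ContinuousSub Y]
    {K : Set X} {D₁ D₂ : X → Set Y}
    (h₁ : IsCompact (graphOver K D₁)) (h₂ : IsCompact (graphOver K D₂)) :
    IsCompact (graphOver K fun x => D₁ x - D₂ x) := by
  have hdiag : IsClosed {x : (X × Y) × (X × Y) | x.1.1 = x.2.1} :=
    isClosed_eq (by fun_prop) (by fun_prop)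
  have hsub : Continuous fun x : (X × Y) × (X × Y) => (x.1.1, x.1.2 - x.2.2) := by fun_prop
  convert ((h₁.prod h₂).inter_right hdiag).image hsub using 1
  ext ⟨x, v⟩
  constructor
  · rintro ⟨hx, u, hu, w, hw, rfl⟩
    exact ⟨((x, u), (x, w)), ⟨⟨⟨hx, hu⟩, ⟨hx, hw⟩⟩, rfl⟩, rfl⟩
  · rintro ⟨⟨⟨x₁, u⟩, ⟨x₂, w⟩⟩, ⟨⟨⟨hx, hu⟩, ⟨-, hw⟩⟩, rfl : x₁ = x₂⟩, heq⟩
    obtain ⟨rfl, rfl⟩ := Prod.mk.inj heq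
    exact ⟨hx, Set.sub_mem_sub hu hw⟩

end Ultrafilter

section Subdifferential

variable {n m : ℕ} {K : Set ((Fin n → ℝ) × (Fin m → ℝ))} {g : (Fin n → ℝ) × (Fin m → ℝ) → ℝ}

theorem continuous_dotE :
    Continuous fun x : ((Fin n → ℝ) × (Fin m → ℝ)) × ((Fin n → ℝ) × (Fin m → ℝ)) =>
      dotE x.1 x.2 := by
  unfold dotE
  fun_prop

theorem tendsto_dotE {α : Type*} {l : Filter α} {u v : α → (Fin n → ℝ) × (Fin m → ℝ)}
    {u₀ v₀ : (Fin n → ℝ) × (Fin m → ℝ)} (hu : Tendsto u l (𝓝 u₀)) (hv : Tendsto v l (𝓝 v₀)) :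
    Tendsto (fun a => dotE (u a) (v a)) l (𝓝 (dotE u₀ v₀)) := by
  simpa only [Function.comp_def] using
    (continuous_dotE.tendsto (u₀, v₀)).comp (hu.prodMk_nhds hv)

theorem dotE_single_left (i : Fin n) (c : ℝ) (v : (Fin n → ℝ) × (Fin m → ℝ)) :
    dotE (Pi.single i c, 0) v = c * v.1 i := by
  simp [dotE, Pi.single_apply]

theorem dotE_single_right (j : Fin m) (c : ℝ) (v : (Fin n → ℝ) × (Fin m → ℝ)) :
    dotE (0, Pi.single j c) v = c * v.2 j := by
  simp [dotE, Pi.single_apply]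

theorem norm_le_of_forall_dotE_le {v : (Fin n → ℝ) × (Fin m → ℝ)} {M : ℝ}
    (hv : ∀ w, ‖w‖ ≤ 1 → dotE w v ≤ M) : ‖v‖ ≤ M := by
  have abs_le_of_mul_le {t : ℝ} (ht : ∀ c : ℝ, |c| ≤ 1 → c * t ≤ M) : |t| ≤ M :=
    abs_le'.2 ⟨by simpa using ht 1 (by simp), by simpa using ht (-1) (by simp)⟩
  have hM : 0 ≤ M := by simpa [dotE] using hv 0 (by simp)
  refine max_le ((pi_norm_le_iff_of_nonneg hM).2 fun i => abs_le_of_mul_le fun c hc => ?_)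
    ((pi_norm_le_iff_of_nonneg hM).2 fun j => abs_le_of_mul_le fun c hc => ?_)
  · rw [← dotE_single_left i c v]
    exact hv _ (by simpa [Prod.norm_def, Pi.norm_single] using hc)
  · rw [← dotE_single_right j c v]
    exact hv _ (by simpa [Prod.norm_def, Pi.norm_single] using hc)

theorem exists_norm_le_of_mem_subdiffE (hK : IsCompact K) (hg : Continuous g) :
    ∃ M, ∀ p ∈ K, ∀ v ∈ subdiffE g p, ‖v‖ ≤ M := by
  have hincr : Continuous
      fun x : ((Fin n → ℝ) × (Fin m → ℝ)) × ((Fin n → ℝ) × (Fin m → ℝ)) =>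
        g (x.1 + x.2) - g x.1 := by
    fun_prop
  obtain ⟨M, hM⟩ := (hK.prod (isCompact_closedBall 0 1)).bddAbove_image hincr.continuousOn
  refine ⟨M, fun p hp v hv => norm_le_of_forall_dotE_le fun w hw => ?_⟩
  have hsubgrad : g p + dotE w v ≤ g (p + w) := by simpa using hv (p + w)
  have hbound : g (p + w) - g p ≤ M :=
    hM ⟨(p, w), ⟨hp, mem_closedBall_zero_iff.2 hw⟩, rfl⟩
  linarith

theorem isClosed_setOf_mem_subdiffE (hg : Continuous g) :
    IsClosed {x : ((Fin n → ℝ) × (Fin m → ℝ)) × ((Fin n → ℝ) × (Fin m → ℝ)) |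
      x.2 ∈ subdiffE g x.1} := by
  change IsClosed {x : ((Fin n → ℝ) × (Fin m → ℝ)) × ((Fin n → ℝ) × (Fin m → ℝ)) |
    ∀ q, g x.1 + dotE (q - x.1) x.2 ≤ g q}
  rw [Set.ofPred_forall]
  refine isClosed_iInter fun q => ?_
  have hdot : Continuous fun x : ((Fin n → ℝ) × (Fin m → ℝ)) × ((Fin n → ℝ) × (Fin m → ℝ)) =>
      dotE (q - x.1) x.2 :=
    continuous_dotE.comp ((continuous_const.sub continuous_fst).prodMk continuous_snd)
  exact isClosed_le ((hg.comp continuous_fst).add hdot) continuous_const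

theorem isCompact_graphOver_subdiffE (hK : IsCompact K) (hg : Continuous g) :
    IsCompact (graphOver K (subdiffE g)) := by
  obtain ⟨M, hM⟩ := exists_norm_le_of_mem_subdiffE hK hg
  refine (hK.prod (isCompact_closedBall 0 M)).of_isClosed_subset
    ((hK.isClosed.preimage continuous_fst).inter (isClosed_setOf_mem_subdiffE hg)) ?_
  exact fun x hx => ⟨hx.1, mem_closedBall_zero_iff.2 (hM _ hx.1 _ hx.2)⟩

open scoped Pointwise in
theorem isCompact_graphOver_subdiffE_sub (hK : IsCompact K) (hg : ConvexOn ℝ Set.univ g)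
    {h : (Fin n → ℝ) × (Fin m → ℝ) → ℝ} (hh : ConvexOn ℝ Set.univ h) :
    IsCompact (graphOver K fun p => subdiffE g p - subdiffE h p) :=
  isCompact_graphOver_sub
    (isCompact_graphOver_subdiffE hK (continuousOn_univ.1 (hg.continuousOn isOpen_univ)))
    (isCompact_graphOver_subdiffE hK (continuousOn_univ.1 (hh.continuousOn isOpen_univ)))

end Subdifferential

/-- Conditions (iv) and (v) of Assumption 1 for set-valued maps `T a` in place of the
subdifferentials `∂r_θ`, along a filter `l` in place of `θ → +∞`: elements of `T a t` have the sign
of `t`, and `T a` tends to `{0}` locally uniformly away from `0`. -/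
structure IsVanishingPenalty {α : Type*} (T : α → ℝ → Set ℝ) (l : Filter α) : Prop where
  mul_nonneg : ∀ᶠ a in l, ∀ t, ∀ μ ∈ T a t, 0 ≤ t * μ
  tendsto_smallSets : ∀ t ≠ 0, Tendsto (fun x : α × ℝ => T x.1 x.2) (l ×ˢ 𝓝 t) (𝓝 0).smallSets

namespace IsVanishingPenalty

variable {α ι : Type*} {T : α → ℝ → Set ℝ} {l l' : Filter α}

theorem mono (hT : IsVanishingPenalty T l) (hl : l' ≤ l) : IsVanishingPenalty T l' where
  mul_nonneg := hT.mul_nonneg.filter_mono hl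
  tendsto_smallSets t ht := (hT.tendsto_smallSets t ht).mono_left (prod_mono_left _ hl)

open scoped Pointwise in
theorem const_smul (hT : IsVanishingPenalty T l) {c : ℝ} (hc : 0 ≤ c) :
    IsVanishingPenalty (fun a t => c • T a t) l where
  mul_nonneg := by
    filter_upwards [hT.mul_nonneg] with a ha t
    rintro _ ⟨μ, hμ, rfl⟩
    simpa only [smul_eq_mul, mul_left_comm] using _root_.mul_nonneg hc (ha t μ hμ)
  tendsto_smallSets t ht := by
    have hsmul : Tendsto (fun μ : ℝ => c • μ) (𝓝 0) (𝓝 0) := by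
      simpa using (continuous_const_smul c).tendsto (0 : ℝ)
    exact hsmul.image_smallSets.comp (hT.tendsto_smallSets t ht)

theorem tendsto_zero (hT : IsVanishingPenalty T l) {x z : α → ℝ} {x₀ : ℝ} (hx₀ : x₀ ≠ 0)
    (hx : Tendsto x l (𝓝 x₀)) (hz : ∀ᶠ a in l, z a ∈ T a (x a)) : Tendsto z l (𝓝 0) :=
  ((hT.tendsto_smallSets x₀ hx₀).comp (tendsto_id.prodMk hx)).of_smallSets hz

theorem nonneg_of_tendsto [Fintype ι] [l.NeBot] (hT : IsVanishingPenalty T l)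
    {x z : α → ι → ℝ} {x₀ y : ι → ℝ} {c : α → ℝ} {c₀ : ℝ}
    (hx : Tendsto x l (𝓝 x₀)) (hz : ∀ᶠ a in l, ∀ i, z a i ∈ T a (x a i))
    (hc : Tendsto c l (𝓝 c₀)) (hy : ∀ i, x₀ i = 0 → y i = 0)
    (hineq : ∀ᶠ a in l, 0 ≤ c a + ∑ i, z a i * (y i - x a i)) : 0 ≤ c₀ := by
  let supp : Finset ι := {i | x₀ i ≠ 0}
  have hxi (i : ι) : Tendsto (fun a => x a i) l (𝓝 (x₀ i)) := tendsto_pi_nhds.1 hx i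
  have supp_sum_tendsto :
      Tendsto (fun a => ∑ i ∈ supp, z a i * (y i - x a i)) l (𝓝 0) := by
    rw [← Finset.sum_const_zero (s := supp)]
    refine tendsto_finsetSum _ fun i hi => ?_
    have hzi : Tendsto (fun a => z a i) l (𝓝 0) :=
      hT.tendsto_zero (Finset.mem_filter.1 hi).2 (hxi i) (hz.mono fun _ h => h i)
    simpa using hzi.mul ((hxi i).const_sub (y i))
  refine ge_of_tendsto (by simpa using hc.add supp_sum_tendsto) ?_
  filter_upwards [hT.mul_nonneg, hz, hineq] with a hsign hza ha
  refine ha.trans (add_le_add_right (Finset.sum_le_sum_of_subset_of_nonpos' supp.subset_univ ?_) _)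
  intro i _ hi
  have hyi : y i = 0 := hy i (by simpa [supp] using hi)
  rw [hyi]
  linarith [hsign _ _ (hza i)]

end IsVanishingPenalty

theorem Assumption1.isVanishingPenalty {r φ ψ : ℝ → ℝ → ℝ} (hA : Assumption1 r φ ψ) :
    IsVanishingPenalty (fun θ => rSubdiff (φ θ) (ψ θ)) atTop := by
  obtain ⟨-, -, -, -, hsign, hvanish⟩ := hA
  refine ⟨(eventually_gt_atTop 0).mono hsign, fun t ht => ?_⟩
  rw [Metric.nhds_basis_closedBall.smallSets.tendsto_right_iff]
  intro δ hδ
  have hzero : (0 : ℝ) ∉ Set.Icc (t - |t| / 2) (t + |t| / 2) := by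
    rw [← Real.closedBall_eq_Icc, Metric.mem_closedBall, dist_zero_left, Real.norm_eq_abs]
    linarith [abs_pos.2 ht]
  obtain ⟨Θ, hΘ⟩ := hvanish _ _ (by linarith [abs_nonneg t]) hzero δ hδ
  have hnear : ∀ᶠ s in 𝓝 t, s ∈ Set.Icc (t - |t| / 2) (t + |t| / 2) := by
    rw [← Real.closedBall_eq_Icc]
    exact Metric.closedBall_mem_nhds t (by positivity)
  filter_upwards [(eventually_ge_atTop Θ).prod_mk hnear] with x hx μ hμ
  simpa using hΘ x.1 hx.1 x.2 hx.2 μ hμ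

section Stationary

variable {n m : ℕ}

/-- The stationary points of the zero-norm problem over `K`, for a set-valued map `D` in place of
`∂f`: the variational inequality is tested on `K(x)` only. -/
def stationaryPoints (K : Set ((Fin n → ℝ) × (Fin m → ℝ)))
    (D : (Fin n → ℝ) × (Fin m → ℝ) → Set ((Fin n → ℝ) × (Fin m → ℝ))) :
    Set ((Fin n → ℝ) × (Fin m → ℝ)) :=
  {p | p ∈ K ∧ ∃ v ∈ D p, ∀ q ∈ K, (∀ i, p.1 i = 0 → q.1 i = 0) → 0 ≤ dotE v (q - p)}

/-- The stationary points of the problem over `K` whose first block of variables is penalised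
componentwise, for set-valued maps `D` in place of `∂f` and `T` in place of `λ ∂r_θ`. -/
def penalizedStationaryPoints (K : Set ((Fin n → ℝ) × (Fin m → ℝ)))
    (D : (Fin n → ℝ) × (Fin m → ℝ) → Set ((Fin n → ℝ) × (Fin m → ℝ))) (T : ℝ → Set ℝ) :
    Set ((Fin n → ℝ) × (Fin m → ℝ)) :=
  {p | p ∈ K ∧ ∃ v ∈ D p, ∃ z : Fin n → ℝ, (∀ i, z i ∈ T (p.1 i)) ∧
    ∀ q ∈ K, 0 ≤ dotE v (q - p) + ∑ i, z i * (q.1 i - p.1 i)}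

variable {α : Type*} {K : Set ((Fin n → ℝ) × (Fin m → ℝ))}
  {D : (Fin n → ℝ) × (Fin m → ℝ) → Set ((Fin n → ℝ) × (Fin m → ℝ))} {T : α → ℝ → Set ℝ}

open scoped Pointwise in
theorem stationaryPoints_sub
    (D₁ D₂ : (Fin n → ℝ) × (Fin m → ℝ) → Set ((Fin n → ℝ) × (Fin m → ℝ))) :
    stationaryPoints K (fun p => D₁ p - D₂ p) =
      {p | p ∈ K ∧ ∃ u ∈ D₁ p, ∃ w ∈ D₂ p,
        ∀ q ∈ K, (∀ i, p.1 i = 0 → q.1 i = 0) → 0 ≤ dotE (u - w) (q - p)} := by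
  simp only [stationaryPoints, ← Set.image2_sub, Set.exists_mem_image2]

open scoped Pointwise in
theorem penalizedStationaryPoints_sub_smul
    (D₁ D₂ : (Fin n → ℝ) × (Fin m → ℝ) → Set ((Fin n → ℝ) × (Fin m → ℝ)))
    (c : ℝ) (S : ℝ → Set ℝ) :
    penalizedStationaryPoints K (fun p => D₁ p - D₂ p) (fun t => c • S t) =
      {p | p ∈ K ∧ ∃ u ∈ D₁ p, ∃ w ∈ D₂ p, ∃ z : Fin n → ℝ,
        (∀ i, ∃ μ ∈ S (p.1 i), z i = c * μ) ∧
        ∀ q ∈ K, 0 ≤ dotE (u - w) (q - p) + ∑ i, z i * (q.1 i - p.1 i)} := by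
  simp only [penalizedStationaryPoints, ← Set.image2_sub, Set.exists_mem_image2,
    Set.mem_smul_set, smul_eq_mul, eq_comm]

theorem exists_mem_stationaryPoints_tendsto (hD : IsCompact (graphOver K D)) {U : Ultrafilter α}
    (hT : IsVanishingPenalty T U) {p : α → (Fin n → ℝ) × (Fin m → ℝ)}
    (hp : ∀ᶠ a in (U : Filter α), p a ∈ penalizedStationaryPoints K D (T a)) :
    ∃ p₀ ∈ stationaryPoints K D, Tendsto p U (𝓝 p₀) := by
  obtain ⟨v, hv⟩ := (hp.mono fun _ h => h.2).choice
  obtain ⟨z, hz⟩ := (hv.mono fun _ h => h.2).choice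
  have hgraph : ∀ᶠ a in (U : Filter α), (p a, v a) ∈ graphOver K D :=
    (hp.and hv).mono fun _ h => ⟨h.1.1, h.2.1⟩
  obtain ⟨⟨p₀, v₀⟩, ⟨hp₀, hv₀⟩, hlim⟩ :=
    hD.ultrafilter_le_nhds' (U.map fun a => (p a, v a)) hgraph
  have hpv : Tendsto (fun a => (p a, v a)) U (𝓝 (p₀, v₀)) := hlim
  have hplim : Tendsto p U (𝓝 p₀) := hpv.fst_nhds
  have hvlim : Tendsto v U (𝓝 v₀) := hpv.snd_nhds
  refine ⟨p₀, ⟨hp₀, v₀, hv₀, fun q hq hq₀ => ?_⟩, hplim⟩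
  have hdot : Tendsto (fun a => dotE (v a) (q - p a)) U (𝓝 (dotE v₀ (q - p₀))) :=
    tendsto_dotE hvlim (hplim.const_sub q)
  have hineq : ∀ᶠ a in (U : Filter α),
      0 ≤ dotE (v a) (q - p a) + ∑ i, z a i * (q.1 i - (p a).1 i) :=
    hz.mono fun _ h => h.2 q hq
  exact hT.nonneg_of_tendsto hplim.fst_nhds (hz.mono fun _ h => h.1) hdot hq₀ hineq

open scoped Pointwise in
theorem stmt_9_general {l : Filter α} (hD : IsCompact (graphOver K D))
    (hT : IsVanishingPenalty T l) {ε : ℝ} (hε : 0 < ε) :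
    ∀ᶠ a in l, penalizedStationaryPoints K D (T a) ⊆ stationaryPoints K D + Metric.ball 0 ε := by
  refine eventually_subset_of_forall_ultrafilter_tendsto Metric.isOpen_ball.add_left
    fun U p hU hp => ?_
  obtain ⟨p₀, hp₀, hlim⟩ := exists_mem_stationaryPoints_tendsto hD (hT.mono hU) hp
  exact ⟨p₀, ⟨p₀, hp₀, 0, Metric.mem_ball_self hε, add_zero p₀⟩, hlim⟩

end Stationary

open Pointwise in
/-- if `K` is compact, points satisfying the approximate stationarity
condition eventually lie in an `ε`-neighbourhood of `L`. -/
theorem stmt_9 {n m : ℕ}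
    (K : Set ((Fin n → ℝ) × (Fin m → ℝ))) (hK : Convex ℝ K) (hKc : IsCompact K)
    (g h : (Fin n → ℝ) × (Fin m → ℝ) → ℝ)
    (hg : ConvexOn ℝ Set.univ g) (hh : ConvexOn ℝ Set.univ h)
    (f : (Fin n → ℝ) × (Fin m → ℝ) → ℝ) (hf : ∀ p, f p = g p - h p)
    (lam : ℝ) (hlam : 0 < lam)
    (r φ ψ : ℝ → ℝ → ℝ) (hA : Assumption1 r φ ψ)
    (L : Set ((Fin n → ℝ) × (Fin m → ℝ)))
    (hL : L = {p | p ∈ K ∧ ∃ vg ∈ subdiffE g p, ∃ vh ∈ subdiffE h p,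
      ∀ q ∈ K, (∀ i, p.1 i = 0 → q.1 i = 0) → 0 ≤ dotE (vg - vh) (q - p)})
    (Lθ : ℝ → Set ((Fin n → ℝ) × (Fin m → ℝ)))
    (hLθ : ∀ θ, Lθ θ = {p | p ∈ K ∧ ∃ vg ∈ subdiffE g p, ∃ vh ∈ subdiffE h p,
      ∃ zbar : Fin n → ℝ,
        (∀ i, ∃ μ ∈ rSubdiff (φ θ) (ψ θ) (p.1 i), zbar i = lam * μ) ∧
        ∀ q ∈ K, 0 ≤ dotE (vg - vh) (q - p) + ∑ i, zbar i * (q.1 i - p.1 i)}) :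
    ∀ ε > (0 : ℝ), ∃ Θ > (0 : ℝ), ∀ θ ≥ Θ, Lθ θ ⊆ L + Metric.ball 0 ε := by
  intro ε hε
  have hsubset := stmt_9_general (isCompact_graphOver_subdiffE_sub hKc hg hh)
    (hA.isVanishingPenalty.const_smul hlam.le) hε
  obtain ⟨Θ, hΘ⟩ := ((eventually_gt_atTop 0).and hsubset).exists_forall_of_atTop
  refine ⟨Θ, (hΘ Θ le_rfl).1, fun θ hθ => ?_⟩
  simpa only [hL, hLθ, stationaryPoints_sub, penalizedStationaryPoints_sub_smul] using (hΘ θ hθ).2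
end

section
/- Let τ ≥ λ and set θ = (τ + λ)/(λ M). Then the penalized problem and the capped-ℓ1 approximate problem with parameter θ are equivalent in the following sense: (x*,y*) is an optimal solution of the capped-ℓ1 approximate problem if and only if (x*,y*,u*) is an optimal solution of the penalized problem, where for each i, u*_i is chosen in {|x*_i|/M, 1} so that π(u*_i) = r_cap,θ(x*_i). Moreover the optimal values of the two problems are equal. -/
/-!
Put `s = τ / λ ≥ 1`. The penalty `t + s * min t (1 - t)` is concave, so on `[|x| / M, 1]` it is
minimised at an endpoint, and the smaller of the two endpoint values is exactly the capped-ℓ1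
function of `x` with parameter `(1 + s) / M = θ`. Since the variables `u i` occur in separate
terms, minimising the penalized objective over `u` alone gives the capped-ℓ1 objective, and the two
problems differ by this partial minimisation.
-/

section PartialMinimization

variable {X U α : Type*} {K : Set X} {C : X → Set U} {φ : X → α} {F : X → U → α}

theorem forall_le_iff_of_isGLB_image [Preorder α] (hφ : ∀ x ∈ K, IsGLB (F x '' C x) (φ x)) {c : α} :
    (∀ x ∈ K, c ≤ φ x) ↔ ∀ x ∈ K, ∀ u ∈ C x, c ≤ F x u :=
  forall₂_congr fun x hx => by
    rw [le_isGLB_iff (hφ x hx), mem_lowerBounds, Set.forall_mem_image]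

theorem sInf_image_eq_of_isLeast_image [ConditionallyCompleteLinearOrder α]
    (hφ : ∀ x ∈ K, IsLeast (F x '' C x) (φ x)) :
    sInf (φ '' K) = sInf {v | ∃ x ∈ K, ∃ u ∈ C x, v = F x u} := by
  apply csInf_eq_csInf_of_forall_exists_le
  · rintro _ ⟨x, hx, rfl⟩
    obtain ⟨u, hu, hux⟩ := (hφ x hx).1
    exact ⟨F x u, ⟨x, hx, u, hu, rfl⟩, hux.le⟩
  · rintro _ ⟨x, hx, u, hu, rfl⟩
    exact ⟨φ x, Set.mem_image_of_mem φ hx, (hφ x hx).2 (Set.mem_image_of_mem (F x) hu)⟩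

end PartialMinimization

theorem isLeast_image_pi_sum {ι α : Type*} [Fintype ι] {β : ι → Type*} [AddCommMonoid α]
    [Preorder α] [AddLeftMono α] {C : ∀ i, Set (β i)} {g : ∀ i, β i → α} {r : ι → α}
    (hr : ∀ i, IsLeast (g i '' C i) (r i)) :
    IsLeast ((fun w : ∀ i, β i => ∑ i, g i (w i)) '' Set.univ.pi C) (∑ i, r i) := by
  constructor
  · choose w hw hwr using fun i => (hr i).1
    exact ⟨w, fun i _ => hw i, Finset.sum_congr rfl fun i _ => hwr i⟩
  · rintro _ ⟨w, hw, rfl⟩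
    exact Finset.sum_le_sum fun i _ => (hr i).2 (Set.mem_image_of_mem (g i) (hw i trivial))

theorem isLeast_image_Icc_of_concaveOn {𝕜 β : Type*} [Field 𝕜] [LinearOrder 𝕜]
    [IsStrictOrderedRing 𝕜] [AddCommGroup β] [LinearOrder β] [IsOrderedAddMonoid β] [Module 𝕜 β]
    [IsStrictOrderedModule 𝕜 β] {φ : 𝕜 → β} {a b : 𝕜} (hφ : ConcaveOn 𝕜 (Set.Icc a b) φ)
    (hab : a ≤ b) : IsLeast (φ '' Set.Icc a b) (min (φ a) (φ b)) := by
  have ha : a ∈ Set.Icc a b := Set.left_mem_Icc.2 hab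
  have hb : b ∈ Set.Icc a b := Set.right_mem_Icc.2 hab
  constructor
  · rcases min_choice (φ a) (φ b) with h | h <;> rw [h]
    exacts [Set.mem_image_of_mem φ ha, Set.mem_image_of_mem φ hb]
  · rintro _ ⟨t, ht, rfl⟩
    exact hφ.min_le_of_mem_Icc ha hb ht

/-- The capped-ℓ1 function `r_cap,θ`, a bounded surrogate for the indicator of `t ≠ 0`. -/
def cappedL1 (θ t : ℝ) : ℝ := min 1 (θ * |t|)

/-- The penalty `π`, which adds to `t` a charge for being away from `{0, 1}`. The weight `s` stands
for `τ / λ`. -/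
def exactPenalty (s t : ℝ) : ℝ := t + s * min t (1 - t)

theorem exactPenalty_one (s : ℝ) : exactPenalty s 1 = 1 := by
  simp [exactPenalty]

theorem concaveOn_exactPenalty {s : ℝ} (hs : 0 ≤ s) : ConcaveOn ℝ Set.univ (exactPenalty s) := by
  have hid : ConcaveOn ℝ Set.univ fun t : ℝ => t := concaveOn_id convex_univ
  have hsub : ConcaveOn ℝ Set.univ fun t : ℝ => 1 - t :=
    (concaveOn_const 1 convex_univ).sub (convexOn_id convex_univ)
  exact hid.add ((hid.inf hsub).smul hs)

theorem min_exactPenalty_one {s t : ℝ} (hs : 1 ≤ s) (ht : t ≤ 1) :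
    min (exactPenalty s t) 1 = min 1 ((1 + s) * t) := by
  rcases le_total t (1 - t) with h | h
  · have hπ : exactPenalty s t = (1 + s) * t := by rw [exactPenalty, min_eq_left h]; ring
    rw [hπ, min_comm]
  · have hπ : 1 ≤ exactPenalty s t := by rw [exactPenalty, min_eq_right h]; nlinarith
    have hlin : 1 ≤ (1 + s) * t := by nlinarith
    rw [min_eq_right hπ, min_eq_left hlin]

theorem isLeast_image_exactPenalty_Icc {s M x : ℝ} (hs : 1 ≤ s) (hx : |x| / M ≤ 1) :
    IsLeast (exactPenalty s '' Set.Icc (|x| / M) 1) (cappedL1 ((1 + s) / M) x) := by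
  have hmin := isLeast_image_Icc_of_concaveOn
    ((concaveOn_exactPenalty (zero_le_one.trans hs)).subset (Set.subset_univ _) (convex_Icc _ _)) hx
  rwa [exactPenalty_one, min_exactPenalty_one hs hx, mul_div_left_comm, mul_comm |x|] at hmin

theorem isLeast_image_penalizedObjective {ι : Type*} [Fintype ι] {s M lam : ℝ} (c : ℝ) {x : ι → ℝ}
    (hlam : 0 ≤ lam) (hs : 1 ≤ s) (hx : ∀ i, |x i| / M ≤ 1) :
    IsLeast ((fun w : ι → ℝ => c + lam * ∑ i, exactPenalty s (w i)) ''
        Set.univ.pi fun i => Set.Icc (|x i| / M) 1)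
      (c + lam * ∑ i, cappedL1 ((1 + s) / M) (x i)) := by
  have hmono : Monotone fun v : ℝ => c + lam * v :=
    (monotone_mul_left_of_nonneg hlam).const_add c
  have hsum := isLeast_image_pi_sum fun i => isLeast_image_exactPenalty_Icc hs (hx i)
  simpa only [Set.image_image] using hmono.map_isLeast hsum

theorem stmt_11_general {ι Y : Type*} [Fintype ι] {K : Set ((ι → ℝ) × Y)} (f : (ι → ℝ) × Y → ℝ)
    {lam τ M θ : ℝ} {π rcap : ℝ → ℝ} (hlam : 0 < lam) (hτ : lam ≤ τ) (hM : 0 < M)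
    (hKM : ∀ p ∈ K, ∀ i, |p.1 i| ≤ M) (hθ : θ = (τ + lam) / (lam * M))
    (hπ : ∀ t, π t = t + (τ / lam) * min t (1 - t)) (hrcap : ∀ t, rcap t = min 1 (θ * |t|)) :
    (∀ p ∈ K, ∀ u : ι → ℝ, (∀ i, (u i = |p.1 i| / M ∨ u i = 1) ∧ π (u i) = rcap (p.1 i)) →
      ((∀ q ∈ K, f p + lam * ∑ i, rcap (p.1 i) ≤ f q + lam * ∑ i, rcap (q.1 i)) ↔
        ((∀ i, |p.1 i| / M ≤ u i ∧ u i ≤ 1) ∧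
          ∀ q ∈ K, ∀ w : ι → ℝ, (∀ i, |q.1 i| / M ≤ w i ∧ w i ≤ 1) →
            f p + lam * ∑ i, π (u i) ≤ f q + lam * ∑ i, π (w i))))
    ∧ sInf ((fun p => f p + lam * ∑ i, rcap (p.1 i)) '' K)
      = sInf {v | ∃ p ∈ K, ∃ w : ι → ℝ,
          (∀ i, |p.1 i| / M ≤ w i ∧ w i ≤ 1) ∧ v = f p + lam * ∑ i, π (w i)} := by
  have hθs : θ = (1 + τ / lam) / M := by rw [hθ, ← div_div, add_div, div_self hlam.ne', add_comm]
  obtain rfl : π = exactPenalty (τ / lam) := funext hπ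
  obtain rfl : rcap = cappedL1 ((1 + τ / lam) / M) := hθs ▸ funext hrcap
  have hx : ∀ p ∈ K, ∀ i, |p.1 i| / M ≤ 1 := fun p hp i => (div_le_one hM).2 (hKM p hp i)
  have hmin := fun p hp =>
    isLeast_image_penalizedObjective (f p) hlam.le ((one_le_div hlam).2 hτ) (hx p hp)
  refine ⟨fun p hp u hu => ?_, ?_⟩
  · have hfeas : ∀ i, |p.1 i| / M ≤ u i ∧ u i ≤ 1 := by
      intro i
      rcases (hu i).1 with h | h <;> rw [h]
      exacts [⟨le_rfl, hx p hp i⟩, ⟨hx p hp i, le_rfl⟩]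
    have hval := Finset.sum_congr rfl fun i (_ : i ∈ Finset.univ) => (hu i).2
    rw [and_iff_right hfeas, hval]
    simpa only [Set.mem_univ_pi, Set.mem_Icc] using
      forall_le_iff_of_isGLB_image fun q hq => (hmin q hq).isGLB
  · simpa only [Set.mem_univ_pi, Set.mem_Icc] using sInf_image_eq_of_isLeast_image hmin

/-- Proposition on Capped-ℓ1 vs. exact penalty: for `τ ≥ λ` and
`θ = (τ+λ)/(λM)`, the capped-ℓ1 approximate problem and the penalized problem are
equivalent, and their optimal values coincide. -/
theorem stmt_11 {n m : ℕ}
    (K : Set ((Fin n → ℝ) × (Fin m → ℝ))) (hK : Convex ℝ K)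
    (g h : (Fin n → ℝ) × (Fin m → ℝ) → ℝ)
    (hg : ConvexOn ℝ Set.univ g) (hh : ConvexOn ℝ Set.univ h)
    (f : (Fin n → ℝ) × (Fin m → ℝ) → ℝ) (hf : ∀ p, f p = g p - h p)
    (lam τ : ℝ) (hlam : 0 < lam) (hτpos : 0 < τ) (hτ : lam ≤ τ)
    (a b : Fin n → ℝ) (ha : ∀ i, a i ≤ 0) (hb : ∀ i, 0 < b i)
    (hKsub : K ⊆ {p | ∀ i, p.1 i ∈ Set.Icc (a i) (b i)})
    (M : ℝ) (hM : IsGreatest (Set.range fun i => max |a i| |b i|) M)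
    (θ : ℝ) (hθ : θ = (τ + lam) / (lam * M))
    (π : ℝ → ℝ) (hπ : ∀ t, π t = t + (τ / lam) * min t (1 - t))
    (rcap : ℝ → ℝ) (hrcap : ∀ t, rcap t = min 1 (θ * |t|)) :
    (∀ p ∈ K, ∀ u : Fin n → ℝ,
      (∀ i, (u i = |p.1 i| / M ∨ u i = 1) ∧ π (u i) = rcap (p.1 i)) →
      ((∀ q ∈ K, f p + lam * ∑ i, rcap (p.1 i) ≤ f q + lam * ∑ i, rcap (q.1 i))
        ↔
       ((∀ i, |p.1 i| / M ≤ u i ∧ u i ≤ 1) ∧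
        ∀ q ∈ K, ∀ w : Fin n → ℝ, (∀ i, |q.1 i| / M ≤ w i ∧ w i ≤ 1) →
          f p + lam * ∑ i, π (u i) ≤ f q + lam * ∑ i, π (w i))))
    ∧ sInf ((fun p => f p + lam * ∑ i, rcap (p.1 i)) '' K)
      = sInf {v | ∃ p ∈ K, ∃ w : Fin n → ℝ,
          (∀ i, |p.1 i| / M ≤ w i ∧ w i ≤ 1) ∧ v = f p + lam * ∑ i, π (w i)} := by
  obtain ⟨i, hi⟩ := hM.1
  exact stmt_11_general f hlam hτ (hi ▸ lt_max_of_lt_right (abs_pos.2 (hb i).ne'))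
    (fun p hp j => (abs_le_max_abs_abs (hKsub hp j).1 (hKsub hp j).2).trans (hM.2 ⟨j, rfl⟩))
    hθ hπ hrcap
end

section
/- Let θ > 0 and suppose the ℓ0-problem and the capped-ℓ1 approximate problem with parameter θ have the same set of optimal solutions, and that for some common optimal solution (x*,y*) one has Σ_{i=1}^n r_cap,θ(x*_i) = ‖x*‖₀. Let σ : ℝ → ℝ satisfy r_cap,θ(t) ≤ σ(t) ≤ s(t) for all t ∈ ℝ, where s(t) = 1 for t ≠ 0 and s(0) = 0. Then the problem: minimize f(x,y) + λ Σ_{i=1}^n σ(x_i) over (x,y) ∈ K, is equivalent to the ℓ0-problem: the two problems have the same set of optimal solutions and the same optimal value. -/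
/-!
If `F ≤ G` agree at a minimizer `w` of `F`, then `w` also minimizes `G`, and every minimizer of `G`
minimizes `F`. For `F ≤ G ≤ H` with `F w = H w`, this gives
`argmin H ⊆ argmin G ⊆ argmin F`, so `argmin F ⊆ argmin H` closes the circle. Here `F`, `G`, `H`
are the objectives penalized by the capped-ℓ1 function, by `σ`, and by the step function, whose
coordinate sum is the ℓ0-norm.
-/

/-- The optimal solution set of the problem of minimizing `F` over `K`. It is empty when the
infimum is not attained. -/
def minimizers {α β : Type*} [Preorder β] (F : α → β) (K : Set α) : Set α :=
  {p | p ∈ K ∧ IsMinOn F K p}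

section Minimizers

variable {α β : Type*} {F G H : α → β} {K : Set α} {w : α}

theorem mem_minimizers_of_le_of_eq [Preorder β] (hFG : ∀ p ∈ K, F p ≤ G p)
    (hw : w ∈ minimizers F K) (hFGw : F w = G w) : w ∈ minimizers G K :=
  ⟨hw.1, Filter.EventuallyLE.isMinFilter (Filter.eventually_principal.2 hFG) hFGw hw.2⟩

theorem minimizers_subset_of_le_of_eq [Preorder β] (hFG : ∀ p ∈ K, F p ≤ G p)
    (hw : w ∈ minimizers F K) (hFGw : F w = G w) : minimizers G K ⊆ minimizers F K := by
  rintro p ⟨hpK, hp⟩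
  refine ⟨hpK, isMinOn_iff.2 fun q hq => ?_⟩
  calc
    F p ≤ G p := hFG p hpK
    _ ≤ G w := isMinOn_iff.1 hp w hw.1
    _ = F w := hFGw.symm
    _ ≤ F q := isMinOn_iff.1 hw.2 q hq

theorem sInf_image_eq_of_mem_minimizers [ConditionallyCompleteLattice β]
    (hw : w ∈ minimizers F K) : sInf (F '' K) = F w :=
  (hw.2.isGLB hw.1).csInf_eq ⟨F w, Set.mem_image_of_mem F hw.1⟩

theorem minimizers_eq_and_sInf_image_eq_of_le_of_le [ConditionallyCompleteLattice β]
    (hFG : ∀ p ∈ K, F p ≤ G p) (hGH : ∀ p ∈ K, G p ≤ H p)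
    (hFH : minimizers F K ⊆ minimizers H K) (hw : w ∈ minimizers F K) (hFHw : F w = H w) :
    minimizers G K = minimizers H K ∧ sInf (G '' K) = sInf (H '' K) := by
  have hFGw : F w = G w := (hFG w hw.1).antisymm ((hGH w hw.1).trans_eq hFHw.symm)
  have hGHw : G w = H w := hFGw.symm.trans hFHw
  have hwG : w ∈ minimizers G K := mem_minimizers_of_le_of_eq hFG hw hFGw
  constructor
  · exact ((minimizers_subset_of_le_of_eq hFG hw hFGw).trans hFH).antisymm
      (minimizers_subset_of_le_of_eq hGH hwG hGHw)
  · rw [sInf_image_eq_of_mem_minimizers hwG, sInf_image_eq_of_mem_minimizers (hFH hw), hGHw]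

end Minimizers

theorem sum_stepFn_eq_zeroNorm {n : ℕ} (x : Fin n → ℝ) : ∑ i, stepFn (x i) = zeroNorm x := by
  simp only [zeroNorm, stepFn, Finset.natCast_card_filter, ne_eq, ite_not]

theorem stmt_13_general {n : ℕ} {Y : Type*} {K : Set ((Fin n → ℝ) × Y)}
    {f : (Fin n → ℝ) × Y → ℝ} {lam : ℝ} (hlam : 0 ≤ lam) {r σ : ℝ → ℝ}
    (hσ : ∀ t, r t ≤ σ t ∧ σ t ≤ stepFn t)
    (hsub : minimizers (fun p => f p + lam * ∑ i, r (p.1 i)) K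
      ⊆ minimizers (fun p => f p + lam * zeroNorm p.1) K)
    {w : (Fin n → ℝ) × Y} (hw : w ∈ minimizers (fun p => f p + lam * ∑ i, r (p.1 i)) K)
    (hrw : ∑ i, r (w.1 i) = zeroNorm w.1) :
    minimizers (fun p => f p + lam * ∑ i, σ (p.1 i)) K
        = minimizers (fun p => f p + lam * zeroNorm p.1) K
      ∧ sInf ((fun p => f p + lam * ∑ i, σ (p.1 i)) '' K)
        = sInf ((fun p => f p + lam * zeroNorm p.1) '' K) := by
  refine minimizers_eq_and_sInf_image_eq_of_le_of_le (fun p _ => ?_) (fun p _ => ?_) hsub hw ?_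
  · gcongr with i
    exact (hσ _).1
  · rw [← sum_stepFn_eq_zeroNorm]
    gcongr with i
    exact (hσ _).2
  · simp only [hrw]

/-- Proposition, extension to other approximations: if the ℓ0-problem
and the capped-ℓ1 problem with parameter `θ` are equivalent (with equal approximation
value at some common solution), then any `σ` squeezed between `r_cap,θ` and the step
function also yields a problem equivalent to the ℓ0-problem. -/
theorem stmt_13 {n m : ℕ}
    (K : Set ((Fin n → ℝ) × (Fin m → ℝ))) (hK : Convex ℝ K)
    (g h : (Fin n → ℝ) × (Fin m → ℝ) → ℝ)
    (hg : ConvexOn ℝ Set.univ g) (hh : ConvexOn ℝ Set.univ h)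
    (f : (Fin n → ℝ) × (Fin m → ℝ) → ℝ) (hf : ∀ p, f p = g p - h p)
    (lam : ℝ) (hlam : 0 < lam)
    (θ : ℝ) (hθ : 0 < θ)
    (σ : ℝ → ℝ) (hσ : ∀ t, min 1 (θ * |t|) ≤ σ t ∧ σ t ≤ stepFn t)
    (hsame :
      {p | p ∈ K ∧ ∀ q ∈ K, f p + lam * zeroNorm p.1 ≤ f q + lam * zeroNorm q.1}
      = {p | p ∈ K ∧ ∀ q ∈ K, f p + lam * ∑ i, min 1 (θ * |p.1 i|)
          ≤ f q + lam * ∑ i, min 1 (θ * |q.1 i|)})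
    (hcommon : ∃ pstar, (pstar ∈ K ∧ ∀ q ∈ K,
        f pstar + lam * zeroNorm pstar.1 ≤ f q + lam * zeroNorm q.1) ∧
      (∑ i, min 1 (θ * |pstar.1 i|)) = zeroNorm pstar.1) :
    ({p | p ∈ K ∧ ∀ q ∈ K, f p + lam * ∑ i, σ (p.1 i) ≤ f q + lam * ∑ i, σ (q.1 i)}
      = {p | p ∈ K ∧ ∀ q ∈ K,
          f p + lam * zeroNorm p.1 ≤ f q + lam * zeroNorm q.1})
    ∧ sInf ((fun p => f p + lam * ∑ i, σ (p.1 i)) '' K)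
      = sInf ((fun p => f p + lam * zeroNorm p.1) '' K) := by
  obtain ⟨w, hw, hrw⟩ := hcommon
  exact stmt_13_general hlam.le hσ hsame.ge (hsame.le hw) hrw
end

section
/- Let β > 0, a > 1, and p < 0. Define, for t ∈ ℝ: r_exp(t) = 1 − e^{−β|t|}; r_{ℓp⁻}(t) = 1 − (1 + (−β/p)|t|)^p; r_cap(t) = min{1, β|t|}; and r_scad(t) the SCAD function with parameters a and θ_scad = β(a+1)/2 (so that the right derivatives at 0 of all four functions equal β). Then for every t ∈ ℝ: 0 ≤ r_{ℓp⁻}(t) ≤ r_exp(t) ≤ r_scad(t) ≤ r_cap(t) ≤ s(t), where s(t) = 1 for t ≠ 0 and s(0) = 0. -/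
/-- The SCAD approximation function with parameters `a > 1` and `θ > 0`. -/
noncomputable def rscad (a θ t : ℝ) : ℝ :=
  if |t| ≤ 1 / θ then (2 * θ / (a + 1)) * |t|
  else if |t| < a / θ then (-(θ ^ 2) * t ^ 2 + 2 * a * θ * |t| - 1) / (a ^ 2 - 1)
  else 1

/-!
For `1 < a`, completing the square turns the middle piece of SCAD, as a function of `u = θ|t|`, into
`1 - (a - u)² / (a² - 1)`. This parabola lies below its tangent `2u / (a + 1)` at `u = 1`, which is
the linear piece, and below `1`; that is the upper bound. For the lower bound,
`(a - u)² / (a² - 1) = (1 - 2 / (a + 1)) (1 - (u - 1) / (a - 1))²`, and enlarging the second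
denominator to `a + 1` and using `1 - y ≤ exp (-y)` on both factors gives `exp (-2u / (a + 1))`.
-/

theorem exp_mul_le_one_add_rpow {x p : ℝ} (hx : -1 < x) (hp : p ≤ 0) :
    Real.exp (x * p) ≤ (1 + x) ^ p := by
  rw [Real.exp_mul]
  refine Real.rpow_le_rpow_of_nonpos (by linarith) ?_ hp
  linarith [Real.add_one_le_exp x]

theorem min_one_mul_abs_le_stepFn (c t : ℝ) : min 1 (c * |t|) ≤ stepFn t := by
  unfold stepFn
  split_ifs with ht
  · simp [ht]
  · exact min_le_left _ _

theorem sq_sub_div_sq_sub_one_le_exp_neg {a u : ℝ} (ha : 1 < a) (hu : 1 ≤ u) (hua : u ≤ a) :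
    (a - u) ^ 2 / (a ^ 2 - 1) ≤ Real.exp (-(2 * u / (a + 1))) := by
  have ha_sub : 0 < a - 1 := by linarith
  have hsq : a ^ 2 - 1 = (a - 1) * (a + 1) := by ring
  have hlin_nonneg : 0 ≤ 1 - (u - 1) / (a - 1) :=
    sub_nonneg.2 ((div_le_one ha_sub).2 (by linarith))
  have hlin_le : 1 - (u - 1) / (a - 1) ≤ Real.exp (-((u - 1) / (a + 1))) := calc
    1 - (u - 1) / (a - 1) ≤ 1 - (u - 1) / (a + 1) := by
      gcongr 1 - ?_ / ?_ <;> linarith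
    _ ≤ Real.exp (-((u - 1) / (a + 1))) := Real.one_sub_le_exp_neg _
  calc
    (a - u) ^ 2 / (a ^ 2 - 1) = (1 - 2 / (a + 1)) * (1 - (u - 1) / (a - 1)) ^ 2 := by
      rw [hsq]
      field_simp
      ring
    _ ≤ Real.exp (-(2 / (a + 1))) * Real.exp (-((u - 1) / (a + 1))) ^ 2 := by
      gcongr
      exact Real.one_sub_le_exp_neg _
    _ = Real.exp (-(2 * u / (a + 1))) := by
      rw [← Real.exp_nat_mul, ← Real.exp_add]
      congr 1
      push_cast
      ring

namespace rscad

variable {a θ t : ℝ}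

theorem eq_of_mul_abs_le_one (hθ : 0 < θ) (ht : θ * |t| ≤ 1) :
    rscad a θ t = 2 * θ / (a + 1) * |t| :=
  if_pos ((le_div_iff₀' hθ).2 ht)

theorem eq_of_one_lt_mul_abs_of_mul_abs_lt (hθ : 0 < θ) (ha : 1 < a) (h1t : 1 < θ * |t|)
    (hta : θ * |t| < a) : rscad a θ t = 1 - (a - θ * |t|) ^ 2 / (a ^ 2 - 1) := by
  have hden : a ^ 2 - 1 ≠ 0 := by nlinarith
  rw [rscad, if_neg (not_le.2 ((div_lt_iff₀' hθ).2 h1t)), if_pos ((lt_div_iff₀' hθ).2 hta),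
    ← sq_abs t]
  field_simp
  ring

theorem eq_one_of_le_mul_abs (hθ : 0 < θ) (ha : 1 < a) (hta : a ≤ θ * |t|) :
    rscad a θ t = 1 := by
  rw [rscad, if_neg (not_le.2 ((div_lt_iff₀' hθ).2 (ha.trans_le hta))),
    if_neg (not_lt.2 ((div_le_iff₀' hθ).2 hta))]

theorem le_one (hθ : 0 < θ) (ha : 1 < a) (t : ℝ) : rscad a θ t ≤ 1 := by
  rcases le_or_gt (θ * |t|) 1 with ht1 | h1t
  · rw [eq_of_mul_abs_le_one hθ ht1, div_mul_eq_mul_div, div_le_one (by linarith)]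
    linarith
  rcases lt_or_ge (θ * |t|) a with hta | hat
  · rw [eq_of_one_lt_mul_abs_of_mul_abs_lt hθ ha h1t hta]
    have hden : 0 < a ^ 2 - 1 := by nlinarith
    exact sub_le_self _ (by positivity)
  · exact (eq_one_of_le_mul_abs hθ ha hat).le

theorem le_slope_mul_abs (hθ : 0 < θ) (ha : 1 < a) (t : ℝ) :
    rscad a θ t ≤ 2 * θ / (a + 1) * |t| := by
  rcases le_or_gt (θ * |t|) 1 with ht1 | h1t
  · exact (eq_of_mul_abs_le_one hθ ht1).le
  rcases lt_or_ge (θ * |t|) a with hta | hat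
  · have hden : 0 < a ^ 2 - 1 := by nlinarith
    have htangent : 2 * θ / (a + 1) * |t| - (1 - (a - θ * |t|) ^ 2 / (a ^ 2 - 1)) =
        (θ * |t| - 1) ^ 2 / (a ^ 2 - 1) := by
      have ha_add : a + 1 ≠ 0 := by linarith
      field_simp
      ring
    rw [eq_of_one_lt_mul_abs_of_mul_abs_lt hθ ha h1t hta, ← sub_nonneg, htangent]
    positivity
  · rw [eq_one_of_le_mul_abs hθ ha hat, div_mul_eq_mul_div, one_le_div (by linarith)]
    linarith

theorem one_sub_exp_le (hθ : 0 < θ) (ha : 1 < a) (t : ℝ) :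
    1 - Real.exp (-(2 * θ / (a + 1)) * |t|) ≤ rscad a θ t := by
  rcases le_or_gt (θ * |t|) 1 with ht1 | h1t
  · rw [eq_of_mul_abs_le_one hθ ht1, neg_mul]
    linarith [Real.one_sub_le_exp_neg (2 * θ / (a + 1) * |t|)]
  rcases lt_or_ge (θ * |t|) a with hta | hat
  · have hexponent : -(2 * θ / (a + 1)) * |t| = -(2 * (θ * |t|) / (a + 1)) := by ring
    rw [eq_of_one_lt_mul_abs_of_mul_abs_lt hθ ha h1t hta, hexponent]
    exact sub_le_sub_left (sq_sub_div_sq_sub_one_le_exp_neg ha h1t.le hta.le) 1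
  · rw [eq_one_of_le_mul_abs hθ ha hat]
    exact sub_le_self _ (Real.exp_nonneg _)

end rscad

/-- comparison of the usual approximations calibrated to have the same
right derivative `β` at `0`:
`0 ≤ r_{ℓp⁻} ≤ r_exp ≤ r_scad ≤ r_cap ≤ s`. -/
theorem stmt_15 (β a p : ℝ) (hβ : 0 < β) (ha : 1 < a) (hp : p < 0) :
    ∀ t : ℝ,
      0 ≤ 1 - (1 + (-β / p) * |t|) ^ p ∧
      1 - (1 + (-β / p) * |t|) ^ p ≤ 1 - Real.exp (-β * |t|) ∧
      1 - Real.exp (-β * |t|) ≤ rscad a (β * (a + 1) / 2) t ∧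
      rscad a (β * (a + 1) / 2) t ≤ min 1 (β * |t|) ∧
      min 1 (β * |t|) ≤ stepFn t := by
  intro t
  have hθ : 0 < β * (a + 1) / 2 := by positivity
  have hslope : 2 * (β * (a + 1) / 2) / (a + 1) = β := by field_simp
  have hx : 0 ≤ -β / p * |t| :=
    mul_nonneg (div_nonneg_of_nonpos (by linarith) hp.le) (abs_nonneg t)
  have hxp : -β / p * |t| * p = -β * |t| := by
    rw [mul_right_comm, div_mul_cancel₀ _ hp.ne]
  refine ⟨?_, ?_, ?_, ?_, min_one_mul_abs_le_stepFn β t⟩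
  · exact sub_nonneg.2 (Real.rpow_le_one_of_one_le_of_nonpos (by linarith) hp.le)
  · rw [← hxp]
    exact sub_le_sub_left (exp_mul_le_one_add_rpow (by linarith) hp.le) 1
  · simpa only [hslope] using rscad.one_sub_exp_le hθ ha t
  · refine le_min (rscad.le_one hθ ha t) ?_
    simpa only [hslope] using rscad.le_slope_mul_abs hθ ha t
end

section
/- Let a > 1 and θ_scad, θ_cap > 0. Let r_scad be the SCAD function with parameters a and θ_scad, and r_cap(t) = min{1, θ_cap|t|}. Then: (1) if 2θ_scad/(a+1) ≤ θ_cap, then 0 ≤ r_scad(t) ≤ r_cap(t) ≤ s(t) for all t ∈ ℝ; (2) if θ_cap ≤ θ_scad/a, then 0 ≤ r_cap(t) ≤ r_scad(t) ≤ s(t) for all t ∈ ℝ; here s(t) = 1 for t ≠ 0 and s(0) = 0. -/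
/-!
In the variable `u = θ|t|`, SCAD follows the line `2u / (a + 1)` up to `u = 1`, then a concave
parabola tangent to that line at `u = 1` and to the constant `1` at `u = a`, then the constant `1`.
Both tangents lie above the parabola, while the line `u / a`, which cuts it at `u = 1 / a` and
`u = a`, lies below it on `[1, a]`. Hence SCAD lies between the capped functions of slopes `θ / a`
and `2θ / (a + 1)`, and capped functions increase with their slope.
-/

section ScadArc

variable {K : Type*} [Field K]

/-- The parabolic piece of the SCAD function, as a function of the normalized variable
`u = θ|t|`; SCAD follows it for `1 < u < a`. -/
def scadArc (a u : K) : K := (2 * a * u - u ^ 2 - 1) / (a ^ 2 - 1)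

theorem one_sub_scadArc {a : K} (ha : a ^ 2 - 1 ≠ 0) (u : K) :
    1 - scadArc a u = (a - u) ^ 2 / (a ^ 2 - 1) := by
  unfold scadArc
  field_simp
  ring

theorem mul_sub_scadArc {a : K} (ha : a ^ 2 - 1 ≠ 0) (u : K) :
    2 / (a + 1) * u - scadArc a u = (u - 1) ^ 2 / (a ^ 2 - 1) := by
  have ha' : a + 1 ≠ 0 := fun h ↦ ha (by linear_combination (a - 1) * h)
  unfold scadArc
  field_simp
  ring

theorem scadArc_sub_div {a : K} (ha₀ : a ≠ 0) (ha : a ^ 2 - 1 ≠ 0) (u : K) :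
    scadArc a u - u / a = (a - u) * (a * u - 1) / (a * (a ^ 2 - 1)) := by
  unfold scadArc
  field_simp
  ring

end ScadArc

section ScadProfile

variable {K : Type*} [Field K] [LinearOrder K] [IsStrictOrderedRing K] {a u : K}

theorem scadArc_le_one (ha : 1 < a) (u : K) : scadArc a u ≤ 1 := by
  have hd : 0 < a ^ 2 - 1 := sub_pos.2 (one_lt_pow₀ ha two_ne_zero)
  rw [← sub_nonneg, one_sub_scadArc hd.ne']
  positivity

theorem scadArc_le_mul (ha : 1 < a) (u : K) : scadArc a u ≤ 2 / (a + 1) * u := by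
  have hd : 0 < a ^ 2 - 1 := sub_pos.2 (one_lt_pow₀ ha two_ne_zero)
  rw [← sub_nonneg, mul_sub_scadArc hd.ne']
  positivity

theorem div_le_scadArc (ha : 1 < a) (hu₁ : 1 ≤ u) (hua : u ≤ a) : u / a ≤ scadArc a u := by
  have ha₀ : 0 < a := one_pos.trans ha
  have hd : 0 < a ^ 2 - 1 := sub_pos.2 (one_lt_pow₀ ha two_ne_zero)
  have hau : 0 ≤ a * u - 1 := sub_nonneg.2 (one_le_mul_of_one_le_of_one_le ha.le hu₁)
  rw [← sub_nonneg, scadArc_sub_div ha₀.ne' hd.ne']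
  exact div_nonneg (mul_nonneg (sub_nonneg.2 hua) hau) (by positivity)

/-- The SCAD function in the normalized variable `u = θ|t|`, which removes the dependence on `θ`;
only the values at `u ≥ 0` are meaningful. -/
def scadProfile (a u : K) : K :=
  if u ≤ 1 then 2 / (a + 1) * u else if u < a then scadArc a u else 1

theorem scadProfile_le_one (ha : 1 < a) (u : K) : scadProfile a u ≤ 1 := by
  have ha' : 0 < a + 1 := by linarith
  unfold scadProfile
  split_ifs with hu₁ hua
  · rw [div_mul_eq_mul_div, div_le_one ha']
    linarith
  · exact scadArc_le_one ha u
  · exact le_rfl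

theorem scadProfile_le_mul (ha : 1 < a) (u : K) : scadProfile a u ≤ 2 / (a + 1) * u := by
  have ha' : 0 < a + 1 := by linarith
  unfold scadProfile
  split_ifs with hu₁ hua
  · exact le_rfl
  · exact scadArc_le_mul ha u
  · rw [div_mul_eq_mul_div, le_div_iff₀ ha']
    linarith

theorem min_one_div_le_scadProfile (ha : 1 < a) (hu : 0 ≤ u) :
    min 1 (u / a) ≤ scadProfile a u := by
  have ha₀ : 0 < a := one_pos.trans ha
  have slope_le : 1 / a ≤ 2 / (a + 1) := by
    rw [div_le_div_iff₀ ha₀ (by linarith)]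
    linarith
  unfold scadProfile
  split_ifs with hu₁ hua
  · calc min 1 (u / a) ≤ 1 / a * u := (min_le_right _ _).trans_eq (by ring)
      _ ≤ 2 / (a + 1) * u := mul_le_mul_of_nonneg_right slope_le hu
  · exact (min_le_right _ _).trans (div_le_scadArc ha (not_le.1 hu₁).le hua.le)
  · exact min_le_left _ _

end ScadProfile

section Scad

variable {a θ : ℝ}

theorem rscad_eq_scadProfile (a : ℝ) (hθ : 0 < θ) (t : ℝ) :
    rscad a θ t = scadProfile a (θ * |t|) := by
  have linear_eq : 2 * θ / (a + 1) * |t| = 2 / (a + 1) * (θ * |t|) := by ring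
  have arc_eq : (-(θ ^ 2) * t ^ 2 + 2 * a * θ * |t| - 1) / (a ^ 2 - 1) =
      scadArc a (θ * |t|) := by
    rw [scadArc, ← sq_abs t]
    ring
  simp only [rscad, scadProfile, linear_eq, arc_eq, le_div_iff₀' hθ, lt_div_iff₀' hθ]

theorem rscad_le_min (ha : 1 < a) (hθ : 0 < θ) (t : ℝ) :
    rscad a θ t ≤ min 1 (2 * θ / (a + 1) * |t|) := by
  rw [rscad_eq_scadProfile a hθ]
  refine le_min (scadProfile_le_one ha _) ((scadProfile_le_mul ha _).trans_eq ?_)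
  ring

theorem min_le_rscad (ha : 1 < a) (hθ : 0 < θ) (t : ℝ) :
    min 1 (θ / a * |t|) ≤ rscad a θ t := by
  rw [rscad_eq_scadProfile a hθ, div_mul_eq_mul_div]
  exact min_one_div_le_scadProfile ha (by positivity)

end Scad

section Capped

theorem min_one_mul_abs_nonneg {c : ℝ} (hc : 0 ≤ c) (t : ℝ) : 0 ≤ min 1 (c * |t|) :=
  le_min zero_le_one (by positivity)

theorem min_one_mul_abs_mono (t : ℝ) : Monotone fun c : ℝ ↦ min 1 (c * |t|) :=
  fun _ _ h ↦ min_le_min_left 1 (mul_le_mul_of_nonneg_right h (abs_nonneg t))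

end Capped

/-- comparison of SCAD and Capped-ℓ1 for different parameter values. -/
theorem stmt_16 (a θs θc : ℝ) (ha : 1 < a) (hθs : 0 < θs) (hθc : 0 < θc) :
    ((2 * θs / (a + 1) ≤ θc) → ∀ t : ℝ,
      0 ≤ rscad a θs t ∧ rscad a θs t ≤ min 1 (θc * |t|) ∧
      min 1 (θc * |t|) ≤ stepFn t)
    ∧ ((θc ≤ θs / a) → ∀ t : ℝ,
      0 ≤ min 1 (θc * |t|) ∧ min 1 (θc * |t|) ≤ rscad a θs t ∧
      rscad a θs t ≤ stepFn t) := by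
  constructor <;> intro hc t
  · have slope_nonneg : 0 ≤ θs / a := by positivity
    exact ⟨(min_one_mul_abs_nonneg slope_nonneg t).trans (min_le_rscad ha hθs t),
      (rscad_le_min ha hθs t).trans (min_one_mul_abs_mono t hc),
      min_one_mul_abs_le_stepFn θc t⟩
  · exact ⟨min_one_mul_abs_nonneg hθc.le t,
      (min_one_mul_abs_mono t hc).trans (min_le_rscad ha hθs t),
      (rscad_le_min ha hθs t).trans (min_one_mul_abs_le_stepFn _ t)⟩
end

section
/- Let r : ℝ → ℝ be concave on [0,+∞) and suppose its right derivative at 0, r'(0) = lim_{t→0⁺} (r(t) − r(0))/t, exists and is finite. Then for every η ≥ r'(0), the function ψ(t) = η|t| − r(|t|) is convex on ℝ. -/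
open Filter Topology

/-!
The function `φ t = η * t - r t` is convex on `[0, ∞)` and its right derivative at `0` is
`η - d ≥ 0`. Hence `0` minimizes `φ`, so `φ` is nondecreasing, and composing a nondecreasing convex
function with the convex function `|·|` gives a convex function. Nothing changes when `|·|` is
replaced by another convex function and `0` by the left endpoint of the domain of `r`.
-/

theorem convexOn_comp_of_mapsTo {𝕜 E α β : Type*} [Semiring 𝕜] [PartialOrder 𝕜]
    [AddCommMonoid E] [SMul 𝕜 E]
    [AddCommMonoid α] [PartialOrder α] [SMul 𝕜 α]
    [AddCommMonoid β] [PartialOrder β] [SMul 𝕜 β]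
    {s : Set E} {t : Set β} {f : E → β} {g : β → α}
    (hg : ConvexOn 𝕜 t g) (hf : ConvexOn 𝕜 s f) (hg_mono : MonotoneOn g t)
    (hst : Set.MapsTo f s t) : ConvexOn 𝕜 s (g ∘ f) :=
  ⟨hf.1, fun _ hx _ hy _ _ ha hb hab ↦
    (hg_mono (hst (hf.1 hx hy ha hb hab)) (hg.1 (hst hx) (hst hy) ha hb hab)
      (hf.2 hx hy ha hb hab)).trans (hg.2 (hst hx) (hst hy) ha hb hab)⟩

theorem monotoneOn_of_convexOn_of_isMinOn {𝕜 β : Type*}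
    [Field 𝕜] [LinearOrder 𝕜] [IsStrictOrderedRing 𝕜]
    [AddCommMonoid β] [LinearOrder β] [IsOrderedCancelAddMonoid β]
    [Module 𝕜 β] [PosSMulStrictMono 𝕜 β]
    {S : Set 𝕜} {f : 𝕜 → β} {a : 𝕜} (hf : ConvexOn 𝕜 S f) (ha : IsLeast S a)
    (hmin : IsMinOn f S a) : MonotoneOn f S := by
  intro x hx y hy hxy
  rcases (ha.2 hx).eq_or_lt with rfl | hax
  · exact hmin hy
  · exact hf.le_right_of_left_le'' ha.1 hy hax hxy (hmin hx)

section RightDerivative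

variable {S : Set ℝ} {a d : ℝ}

theorem isMinOn_of_convexOn_of_rightDeriv_nonneg {f : ℝ → ℝ} (hf : ConvexOn ℝ S f)
    (ha : IsLeast S a) (hd : HasDerivWithinAt f d (Set.Ioi a) a) (hd_nonneg : 0 ≤ d) :
    IsMinOn f S a := by
  refine isMinOn_iff.2 fun x hx ↦ ?_
  rcases (ha.2 hx).eq_or_lt with rfl | hax
  · exact le_rfl
  · have hslope : 0 ≤ slope f a x :=
      hd_nonneg.trans (hf.le_slope_of_hasDerivWithinAt_Ioi ha.1 hx hax hd)
    exact (slope_nonneg_iff_of_le hax.le).1 hslope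

theorem stmt_17_general {E : Type*} [AddCommMonoid E] [SMul ℝ E] {s : Set E} {f : E → ℝ}
    {r : ℝ → ℝ} (hf : ConvexOn ℝ s f) (hfS : Set.MapsTo f s S) (hr : ConcaveOn ℝ S r)
    (ha : IsLeast S a) (hd : HasDerivWithinAt r d (Set.Ioi a) a) {η : ℝ} (hη : d ≤ η) :
    ConvexOn ℝ s (fun x ↦ η * f x - r (f x)) := by
  let φ : ℝ → ℝ := fun t ↦ η * t - r t
  have hφ_convex : ConvexOn ℝ S φ := ((LinearMap.mulLeft ℝ η).convexOn hr.1).sub hr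
  have hφ_deriv : HasDerivWithinAt φ (η - d) (Set.Ioi a) a :=
    (hasDerivAt_const_mul η).hasDerivWithinAt.sub hd
  have hφ_min : IsMinOn φ S a :=
    isMinOn_of_convexOn_of_rightDeriv_nonneg hφ_convex ha hφ_deriv (sub_nonneg.2 hη)
  have hφ_mono : MonotoneOn φ S := monotoneOn_of_convexOn_of_isMinOn hφ_convex ha hφ_min
  exact convexOn_comp_of_mapsTo hφ_convex hf hφ_mono hfS

end RightDerivative

/-- Proposition: if `r` is concave on `[0,∞)` with finite right
derivative `d = r'(0)` at `0`, then for every `η ≥ d` the function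
`ψ(t) = η|t| - r(|t|)` is convex on `ℝ`. -/
theorem stmt_17 (r : ℝ → ℝ)
    (hconc : ConcaveOn ℝ (Set.Ici 0) r)
    (d : ℝ)
    (hd : Tendsto (fun t => (r t - r 0) / t) (nhdsWithin 0 (Set.Ioi 0)) (nhds d))
    (η : ℝ) (hη : d ≤ η) :
    ConvexOn ℝ Set.univ (fun t => η * |t| - r |t|) := by
  have hderiv : HasDerivWithinAt r d (Set.Ioi 0) 0 := by
    simpa [hasDerivWithinAt_iff_tendsto_slope', slope_fun_def_field] using hd
  exact stmt_17_general convexOn_univ_norm (fun t _ ↦ abs_nonneg t) hconc isLeast_Ici hderiv hη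
end
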